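/- arXiv:2404.06959 — 2 statements merged into one kernel-verified Lean document; each statement's English description precedes it below -/
import Mathlib

section
/- Let B ⊂ A be a regular inclusion of simple unital C*-algebras with a finite-index conditional expectation, and let E₀ : A → B be the minimal conditional expectation. Then the centralizer C_A(B) is finite-dimensional, E₀ maps C_A(B) into ℂ·1, and the functional τ₀ on C_A(B) determined by E₀(z) = τ₀(z)·1 is a faithful tracial state which is the Markov trace for the inclusion ℂ ⊆ C_A(B) with modulus dim_ℂ C_A(B): τ₀(p)·dim_ℂ(C_A(B)) = dim_ℂ(p·C_A(B)) for every minimal central projection p of C_A(B). -/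
namespace RegularInclusion

variable {A : Type*} [NormedRing A] [StarRing A] [CStarRing A] [CompleteSpace A]
  [NormedAlgebra ℂ A] [StarModule ℂ A]

/-- A conditional expectation of `A` onto the subset `B`: a `ℂ`-linear positive
`B`-bimodular projection of `A` onto `B`. -/
def IsCondExp (B : Set A) (E : A →ₗ[ℂ] A) : Prop :=
  (∀ x, E x ∈ B) ∧ (∀ b ∈ B, E b = b) ∧
  (∀ x, ∃ y, E (star x * x) = star y * y) ∧
  (∀ b₁ ∈ B, ∀ b₂ ∈ B, ∀ x, E (b₁ * x * b₂) = b₁ * E x * b₂)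

/-- `l` is a right quasi-basis for `E`, witnessing finite index. -/
def IsRightQB (E : A →ₗ[ℂ] A) {n : ℕ} (l : Fin n → A) : Prop :=
  ∀ x, x = ∑ i, E (x * l i) * star (l i)

/-- The centralizer (relative commutant) `C_A(B)` of `B` in `A`. -/
def cent (B : Set A) : Set A := {x | ∀ b ∈ B, x * b = b * x}

/-- The normalizer `N_A(B) = {u ∈ U(A) : uBu* = B}` of `B` in `A`. -/
def normalizer (B : Set A) : Set A :=
  {u | u ∈ unitary A ∧ (fun x => u * x * star u) '' B = B}

/-- The set `U(B)` of unitaries of `B`. -/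
def UB (B : Set A) : Set A := {b | b ∈ B ∧ b ∈ unitary A}

/-- The set `U(B)·U(C_A(B))` of products of a unitary of `B` and a unitary of
the centralizer of `B`. -/
def UBC (B : Set A) : Set A :=
  {x | ∃ b c, b ∈ B ∧ b ∈ unitary A ∧ c ∈ cent B ∧ c ∈ unitary A ∧ x = b * c}

/-- Simplicity of the C*-algebra (given as the subset `S` of `A`): the only closed
two-sided ideals of `S` are `{0}` and `S`. -/
def IsSimpleCStar (S : Set A) : Prop :=
  ∀ I : Set A, I ⊆ S → IsClosed I → (0 : A) ∈ I →
    (∀ x ∈ I, ∀ y ∈ I, x + y ∈ I) →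
    (∀ x ∈ I, ∀ b ∈ S, x * b ∈ I ∧ b * x ∈ I) →
    I = {0} ∨ I = S

/-- The intermediate C*-subalgebra `C := C*(B ∪ C_A(B))` generated by `B` and the
centralizer of `B`. -/
def genC (B : Set A) : StarSubalgebra ℂ A :=
  (StarAlgebra.adjoin ℂ (B ∪ cent B)).topologicalClosure

/-- Regularity of the inclusion `B ⊆ A`: the normalizer of `B` generates `A` as a
C*-algebra. -/
def IsRegular (B : Set A) : Prop :=
  (StarAlgebra.adjoin ℂ (normalizer B)).topologicalClosure = ⊤

/-- `E₀` is the minimal conditional expectation of `A` onto `B`: the finite-index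
conditional expectation whose (scalar) Watatani index is least among all finite-index
conditional expectations onto `B`. -/
def IsMinimalCondExp (B : Set A) (E₀ : A →ₗ[ℂ] A) : Prop :=
  IsCondExp B E₀ ∧
  ∃ (r₀ : ℝ) (n : ℕ) (l : Fin n → A), IsRightQB E₀ l ∧
    (∑ i, l i * star (l i)) = (r₀ : ℂ) • 1 ∧
    ∀ E : A →ₗ[ℂ] A, IsCondExp B E → ∀ (m : ℕ) (μ : Fin m → A), IsRightQB E μ →
      ∀ r : ℝ, (∑ i, μ i * star (μ i)) = (r : ℂ) • 1 → r₀ ≤ r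

/-- The centralizer of `B` in `A`, as a `ℂ`-submodule of `A`. -/
def centSubmodule (B : Set A) : Submodule ℂ A where
  carrier := cent B
  zero_mem' := by intro b _; simp
  add_mem' := by
    intro x y hx hy b hb
    rw [add_mul, mul_add, hx b hb, hy b hb]
  smul_mem' := by
    intro c x hx b hb
    rw [smul_mul_assoc, mul_smul_comm, hx b hb]

/-- A minimal central projection of (the C*-algebra given by the subset) `S`. -/
def IsMinCentralProjIn (S : Set A) (p : A) : Prop :=
  p ∈ S ∧ p ≠ 0 ∧ p * p = p ∧ star p = p ∧ (∀ x ∈ S, p * x = x * p) ∧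
  ∀ q ∈ S, q * q = q → star q = q → (∀ x ∈ S, q * x = x * q) → q * p = q → q = 0 ∨ q = p

/-!
By simplicity the center of `A` and that of `B` are scalar, so `E₀` and, for a quasi-basis `l` of
`E₀`, the map `σ z = ∑ᵢ lᵢ z lᵢ*` are scalar-valued on `C = C_A(B)`. Perturbing `E₀` by an
invertible `k = exp (a / 2)` with `a = a*` in `C` gives the expectation `x ↦ E₀ (k x k)`, up to
normalization, whose index is proportional to `E₀ (exp a) σ (exp (-a))`. Minimality at `a = 0`
forces `σ = r E₀` on `C`, where `r` is the index.

An expectation with this property satisfies `E₀ (x z) = E₀ (z x)` for `z` in `C`, and it is the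
only one of index `r`. Hence `τ₀` is a trace, and `E₀` commutes with every automorphism preserving
`B`. Bessel's inequality for `E₀`, summed over the quasi-basis, bounds the size of a
`τ₀`-orthonormal family in `C` by `r`, so `C` is finite dimensional.

Conjugation by the normalizer permutes the minimal central projections of `C`, preserving both `τ₀`
and the dimension of the block. The sum of those sharing the two values of a given `p` commutes
with the normalizer, hence with `A`, so it is `1`. Thus all blocks have the same dimension and the
same trace, and counting gives the Markov property.
-/

section Algebra

open ComplexStarModule in
theorem linearMap_ext_isSelfAdjoint {M N : Type*} [AddCommGroup M] [Module ℂ M] [StarAddMonoid M]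
    [StarModule ℂ M] [AddCommGroup N] [Module ℂ N] {f g : M →ₗ[ℂ] N}
    (h : ∀ a, IsSelfAdjoint a → f a = g a) : f = g := by
  ext x
  rw [← realPart_add_I_smul_imaginaryPart x, map_add, map_add, map_smul, map_smul,
    h _ (ℜ x).2, h _ (ℑ x).2]

theorem finrank_eq_sum_finrank_range {K V ι : Type*} [Field K] [CharZero K] [AddCommGroup V]
    [Module K V] [FiniteDimensional K V] {s : Finset ι} {e : ι → V →ₗ[K] V}
    (he : ∀ i ∈ s, IsIdempotentElem (e i)) (hsum : ∑ i ∈ s, e i = 1) :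
    Module.finrank K V = ∑ i ∈ s, Module.finrank K (LinearMap.range (e i)) := by
  have htrace : ∀ i ∈ s, LinearMap.trace K V (e i) = Module.finrank K (LinearMap.range (e i)) :=
    fun i hi => (LinearMap.IsIdempotentElem.isProj_range _ (he i hi)).trace
  apply Nat.cast_injective (R := K)
  rw [← LinearMap.trace_one, ← hsum, map_sum, Finset.sum_congr rfl htrace, Nat.cast_sum]

theorem finrank_eq_sum_finrank_map {K V ι : Type*} [Field K] [CharZero K] [AddCommGroup V]
    [Module K V] {M : Submodule K V} [FiniteDimensional K M] {s : Finset ι} {e : ι → V →ₗ[K] V}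
    (he : ∀ i ∈ s, IsIdempotentElem (e i)) (hM : ∀ i ∈ s, ∀ x ∈ M, e i x ∈ M)
    (hsum : ∑ i ∈ s, e i = 1) :
    Module.finrank K M = ∑ i ∈ s, Module.finrank K (M.map (e i)) := by
  let f : s → M →ₗ[K] M := fun i => (e i).restrict (hM i i.2)
  have hf : ∀ i, IsIdempotentElem (f i) := fun i =>
    LinearMap.ext fun x => Subtype.ext (LinearMap.congr_fun (he i i.2) (x : V))
  have hfsum : ∑ i, f i = 1 := by
    refine LinearMap.ext fun x => Subtype.ext ?_
    have hx := LinearMap.congr_fun hsum (x : V)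
    rw [← Finset.sum_coe_sort, LinearMap.sum_apply] at hx
    rw [LinearMap.sum_apply, AddSubmonoidClass.coe_finsetSum]
    exact hx
  have hrange : ∀ i, Module.finrank K (LinearMap.range (f i)) = Module.finrank K (M.map (e i)) :=
    fun i => by
      rw [← Submodule.finrank_map_subtype_eq, ← LinearMap.range_comp,
        LinearMap.subtype_comp_restrict, LinearMap.range_domRestrict]
  rw [finrank_eq_sum_finrank_range (fun i _ => hf i) hfsum,
    Finset.sum_congr rfl fun i _ => hrange i,
    Finset.sum_coe_sort s fun i => Module.finrank K (M.map (e i))]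

theorem finrank_map_mulLeft_apply {K R : Type*} [CommRing K] [Ring R] [Algebra K R] {φ : R ≃ₐ[K] R}
    {M : Submodule K R} (hφ : ∀ x, φ x ∈ M ↔ x ∈ M) (p : R) :
    Module.finrank K (M.map (LinearMap.mulLeft K (φ p))) =
      Module.finrank K (M.map (LinearMap.mulLeft K p)) := by
  let e : R ≃ₗ[K] R := φ.toLinearEquiv
  have hM : M.map (e : R →ₗ[K] R) = M := by
    refine (Submodule.map_equiv_eq_comap_symm e M).trans (Submodule.ext fun x => ?_)
    exact (hφ (φ.symm x)).symm.trans (by rw [φ.apply_symm_apply])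
  have hmul : LinearMap.mulLeft K (φ p) ∘ₗ (e : R →ₗ[K] R) =
      (e : R →ₗ[K] R) ∘ₗ LinearMap.mulLeft K p :=
    LinearMap.ext fun x => (map_mul φ p x).symm
  rw [← LinearEquiv.finrank_map_eq e (M.map (LinearMap.mulLeft K p)), ← Submodule.map_comp, ← hmul,
    Submodule.map_comp, hM]

theorem linearIndepOn_of_orthogonal_idempotents {K R : Type*} [Field K] [Ring R] [Algebra K R]
    {O : Set R} (h0 : (0 : R) ∉ O) (hidem : ∀ q ∈ O, IsIdempotentElem q)
    (horth : O.Pairwise fun p q => p * q = 0) : LinearIndepOn K id O := by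
  rw [LinearIndepOn, linearIndependent_iff']
  intro s c hsum i hi
  have hmul : c i • (i : R) = 0 := by
    have := congrArg (fun x => (i : R) * x) hsum
    simp only [id_eq, Finset.mul_sum, mul_smul_comm, mul_zero] at this
    rwa [Finset.sum_eq_single_of_mem i hi fun j _ hji => by
      rw [horth i.2 j.2 fun h => hji (Subtype.ext h.symm), smul_zero], (hidem i i.2).eq] at this
  exact (smul_eq_zero.1 hmul).resolve_right fun h => h0 (h ▸ i.2)

theorem finite_of_linearIndepOn_subset {K V : Type*} [Field K] [AddCommGroup V] [Module K V]
    {M : Submodule K V} [FiniteDimensional K M] {O : Set V} (hO : LinearIndepOn K id O)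
    (hOM : O ⊆ M) : O.Finite := by
  have : LinearIndependent K fun x : O => (⟨x, hOM x.2⟩ : M) :=
    LinearIndependent.of_comp M.subtype hO
  exact this.finite_of_isNoetherian

theorem finiteDimensional_of_orthonormal_card_le {𝕜 V : Type*} [RCLike 𝕜] [NormedAddCommGroup V]
    [InnerProductSpace 𝕜 V] {N : ℕ} (h : ∀ n (v : Fin n → V), Orthonormal 𝕜 v → n ≤ N) :
    FiniteDimensional 𝕜 V := by
  refine Module.rank_lt_aleph0_iff.1 ((rank_le (n := N) fun s hs => ?_).trans_lt
    Cardinal.natCast_lt_aleph0)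
  let v := stdOrthonormalBasis 𝕜 (Submodule.span 𝕜 (s : Set V))
  have hv := v.orthonormal.comp_linearIsometry (Submodule.span 𝕜 (s : Set V)).subtypeₗᵢ
  rw [← finrank_span_finset_eq_card hs]
  exact h _ _ hv

theorem mul_apply_eq_of_le_apply_exp {R : Type*} [NormedRing R] [NormedAlgebra ℝ R]
    [CompleteSpace R] (f g : R →L[ℝ] ℝ) (a : R)
    (h : ∀ t : ℝ, f 1 * g 1 ≤ f (NormedSpace.exp (t • a)) * g (NormedSpace.exp (-(t • a)))) :
    f 1 * g a = f a * g 1 := by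
  have hf : HasDerivAt (fun t : ℝ => f (NormedSpace.exp (t • a))) (f a) 0 := by
    simpa [Function.comp_def] using
      f.hasFDerivAt.comp_hasDerivAt 0 (hasDerivAt_exp_smul_const a (0 : ℝ))
  have hg : HasDerivAt (fun t : ℝ => g (NormedSpace.exp (-(t • a)))) (g (-a)) 0 := by
    simpa [Function.comp_def] using
      g.hasFDerivAt.comp_hasDerivAt 0 (hasDerivAt_exp_smul_const (-a) (0 : ℝ))
  have hmin : IsLocalMin (fun t : ℝ => f (NormedSpace.exp (t • a)) *
      g (NormedSpace.exp (-(t • a)))) 0 := Filter.Eventually.of_forall fun t => by simpa using h t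
  have hderiv := hmin.hasDerivAt_eq_zero (hf.mul hg)
  simp only [zero_smul, neg_zero, NormedSpace.exp_zero, map_neg, mul_neg] at hderiv
  linarith

theorem finiteDimensional_of_functional_orthonormal_card_le {R : Type*} [Ring R] [StarRing R]
    [Algebra ℂ R] [StarModule ℂ R] {M : Submodule ℂ R} (τ : R →ₗ[ℂ] ℂ) {N : ℕ}
    (hstar : ∀ x ∈ M, ∀ y ∈ M, τ (star x * y) = star (τ (star y * x)))
    (hpos : ∀ x ∈ M, 0 ≤ (τ (star x * x)).re) (hdef : ∀ x ∈ M, τ (star x * x) = 0 → x = 0)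
    (hcard : ∀ n (z : Fin n → R), (∀ i, z i ∈ M) →
      (∀ i j, τ (star (z i) * z j) = if i = j then 1 else 0) → n ≤ N) :
    FiniteDimensional ℂ M := by
  let core : InnerProductSpace.Core ℂ M :=
    { inner := fun x y => τ (star (x : R) * y)
      conj_inner_symm := fun x y => (hstar x x.2 y y.2).symm
      re_inner_nonneg := fun x => hpos x x.2
      add_left := fun x y z => by simp [add_mul]
      smul_left := fun x y c => by simp
      definite := fun x hx => Subtype.ext (hdef x x.2 hx) }
  let _ : NormedAddCommGroup M := core.toNormedAddCommGroup
  let _ : InnerProductSpace ℂ M := InnerProductSpace.ofCore core.toCore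
  exact finiteDimensional_of_orthonormal_card_le fun n v hv =>
    hcard n (fun i => v i) (fun i => (v i).2) (orthonormal_iff_ite.1 hv)

end Algebra

section SimpleAlgebras

theorem isUnit_of_mem_center_of_isSimpleCStar {R : Type*} [NormedRing R] [HasSummableGeomSeries R]
    {S : Subring R} (hSclosed : IsClosed (S : Set R)) (hS : IsSimpleCStar (S : Set R)) {w : R}
    (hwS : w ∈ S) (hw : ∀ x ∈ S, w * x = x * w) (hw0 : w ≠ 0) : IsUnit w := by
  let I : Set R := closure ((w * ·) '' S)
  have hideal : I = {0} ∨ I = S := by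
    refine hS I (closure_minimal ?_ hSclosed) isClosed_closure
      (subset_closure ⟨0, S.zero_mem, mul_zero w⟩) (fun x hx y hy => ?_) fun x hx b hb => ⟨?_, ?_⟩
    · rintro _ ⟨a, ha, rfl⟩
      exact S.mul_mem hwS ha
    · refine map_mem_closure₂ continuous_add hx hy ?_
      rintro _ ⟨a, ha, rfl⟩ _ ⟨c, hc, rfl⟩
      exact ⟨a + c, S.add_mem ha hc, mul_add w a c⟩
    · refine map_mem_closure (f := (· * b)) (continuous_mul_const b) hx ?_
      rintro _ ⟨a, ha, rfl⟩
      exact ⟨a * b, S.mul_mem ha hb, (mul_assoc w a b).symm⟩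
    · refine map_mem_closure (f := (b * ·)) (continuous_const_mul b) hx ?_
      rintro _ ⟨a, ha, rfl⟩
      exact ⟨b * a, S.mul_mem hb ha, by simp only [← mul_assoc, hw b hb]⟩
  rcases hideal with hI | hI
  · have hwI : w ∈ I := subset_closure ⟨1, S.one_mem, mul_one w⟩
    rw [hI] at hwI
    exact absurd hwI hw0
  · have h1I : (1 : R) ∈ I := hI ▸ S.one_mem
    obtain ⟨_, hunit, b, hb, rfl⟩ := mem_closure_iff.1 h1I {x | IsUnit x} Units.isOpen isUnit_one
    exact ((Commute.isUnit_mul_iff (hw b hb)).1 hunit).1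

theorem exists_eq_smul_one_of_isSimpleCStar {R : Type*} [NormedRing R] [NormedAlgebra ℂ R]
    [CompleteSpace R] {S : Subalgebra ℂ R} (hSclosed : IsClosed (S : Set R))
    (hS : IsSimpleCStar (S : Set R)) {z : R} (hzS : z ∈ S) (hz : ∀ x ∈ S, z * x = x * z) :
    ∃ c : ℂ, z = c • (1 : R) := by
  rcases subsingleton_or_nontrivial R with _ | _
  · exact ⟨0, Subsingleton.elim _ _⟩
  obtain ⟨c, hc⟩ := spectrum.nonempty z
  refine ⟨c, by_contra fun hne => hc ?_⟩
  have hunit : IsUnit (z - c • (1 : R)) :=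
    isUnit_of_mem_center_of_isSimpleCStar (S := S.toSubring) hSclosed hS
      (S.sub_mem hzS (S.smul_mem S.one_mem c)) (fun x hx => by simp [sub_mul, mul_sub, hz x hx])
      (sub_ne_zero.2 hne)
  rw [spectrum.mem_resolventSet_iff, Algebra.algebraMap_eq_smul_one, ← neg_sub]
  exact hunit.neg

end SimpleAlgebras

/-! ### Conditional expectations and quasi-bases -/

section CondExp

attribute [local instance] CStarAlgebra.spectralOrder CStarAlgebra.spectralOrderedRing

variable {𝔄 : Type*} [CStarAlgebra 𝔄] {B : StarSubalgebra ℂ 𝔄} {E F : 𝔄 →ₗ[ℂ] 𝔄}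
  {n m : ℕ} {l : Fin n → 𝔄} {μ : Fin m → 𝔄}

open ComplexOrder in
theorem exists_ofReal_eq_of_smul_one_nonneg [Nontrivial 𝔄] {c : ℂ} (hc : 0 ≤ c • (1 : 𝔄)) :
    ∃ r : ℝ, 0 ≤ r ∧ (r : ℂ) = c := by
  rw [← Algebra.algebraMap_eq_smul_one] at hc
  exact RCLike.nonneg_iff_exists_ofReal.1
    (spectrum_nonneg_of_nonneg hc (by simp [spectrum.scalar_eq]))

/-- The relative commutant `C_A(B)` as a star subalgebra. -/
def relCommutant (B : StarSubalgebra ℂ 𝔄) : StarSubalgebra ℂ 𝔄 :=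
  StarSubalgebra.centralizer ℂ (B : Set 𝔄)

theorem mem_relCommutant_iff {z : 𝔄} : z ∈ relCommutant B ↔ z ∈ cent (B : Set 𝔄) := by
  refine (StarSubalgebra.mem_centralizer_iff ℂ).trans
    ⟨fun h b hb => (h b hb).1.symm, fun h b hb => ?_⟩
  exact ⟨(h b hb).symm, (h _ (star_mem hb)).symm⟩

theorem IsCondExp.map_one (hE : IsCondExp (B : Set 𝔄) E) : E 1 = 1 := hE.2.1 1 B.one_mem

theorem IsCondExp.map_mul_left (hE : IsCondExp (B : Set 𝔄) E) {b : 𝔄} (hb : b ∈ B) (x : 𝔄) :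
    E (b * x) = b * E x := by simpa using hE.2.2.2 b hb 1 B.one_mem x

theorem IsCondExp.map_mul_right (hE : IsCondExp (B : Set 𝔄) E) {b : 𝔄} (hb : b ∈ B) (x : 𝔄) :
    E (x * b) = E x * b := by simpa using hE.2.2.2 1 B.one_mem b hb x

theorem IsCondExp.map_nonneg (hE : IsCondExp (B : Set 𝔄) E) {x : 𝔄} (hx : 0 ≤ x) : 0 ≤ E x := by
  obtain ⟨y, rfl⟩ := CStarAlgebra.nonneg_iff_eq_star_mul_self.1 hx
  exact CStarAlgebra.nonneg_iff_eq_star_mul_self.2 (hE.2.2.1 y)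

theorem IsCondExp.map_star (hE : IsCondExp (B : Set 𝔄) E) (x : 𝔄) : E (star x) = star (E x) :=
  StarHomClass.map_star (PositiveLinearMap.mk₀ E fun _ => hE.map_nonneg) x

theorem IsCondExp.continuous (hE : IsCondExp (B : Set 𝔄) E) : Continuous E :=
  map_continuous (PositiveLinearMap.mk₀ E fun _ => hE.map_nonneg)

theorem IsCondExp.map_le_map (hE : IsCondExp (B : Set 𝔄) E) {x y : 𝔄} (h : x ≤ y) : E x ≤ E y :=
  sub_nonneg.1 (map_sub E y x ▸ hE.map_nonneg (sub_nonneg.2 h))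

theorem IsCondExp.mul_map_comm (hE : IsCondExp (B : Set 𝔄) E) {z : 𝔄} (hz : z ∈ relCommutant B)
    (x : 𝔄) : z * E x = E x * z := mem_relCommutant_iff.1 hz _ (hE.1 x)

/-- Bessel's inequality for the `B`-valued inner product `E (x* y)`. -/
theorem IsCondExp.sum_star_mul_self_le (hE : IsCondExp (B : Set 𝔄) E) {ι : Type*} [Fintype ι]
    [DecidableEq ι] {z : ι → 𝔄} (hz : ∀ i j, E (star (z i) * z j) = if i = j then 1 else 0)
    (x : 𝔄) : ∑ j, star (E (star (z j) * x)) * E (star (z j) * x) ≤ E (star x * x) := by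
  set b : ι → 𝔄 := fun j => E (star (z j) * x)
  set w : 𝔄 := x - ∑ j, z j * b j with hw
  have hzw : ∀ i, E (star (z i) * w) = 0 := fun i => by
    simp [hw, mul_sub, Finset.mul_sum, ← mul_assoc, hE.map_mul_right (hE.1 _), hz, b]
  have hxw : E (star x * w) = E (star x * x) - ∑ j, star (b j) * b j := by
    simp [hw, mul_sub, Finset.mul_sum, ← mul_assoc, hE.map_mul_right (hE.1 _), b, ← hE.map_star]
  have hww : E (star w * w) = E (star x * w) := by
    nth_rw 1 [hw]
    simp [sub_mul, Finset.sum_mul, mul_assoc, hE.map_mul_left (star_mem (hE.1 _)), hzw, b]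
  rw [← sub_nonneg, ← hxw, ← hww]
  exact hE.map_nonneg (star_mul_self_nonneg w)

theorem IsCondExp.map_mul_eq_zero (hE : IsCondExp (B : Set 𝔄) E) {x : 𝔄}
    (hx : E (star x * x) = 0) (y : 𝔄) : E (y * x) = 0 := by
  have hyx : E (star (y * x) * (y * x)) ≤ 0 := calc
    E (star (y * x) * (y * x)) = E (star x * (star y * y) * x) := by simp [mul_assoc]
    _ ≤ E (‖star y * y‖ • (star x * x)) :=
      hE.map_le_map (CStarAlgebra.star_left_conjugate_le_norm_smul)
    _ = 0 := by rw [LinearMap.map_smul_of_tower, hx, smul_zero]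
  have hbessel := hE.sum_star_mul_self_le (ι := Unit) (z := fun _ => 1)
    (fun _ _ => by simp [hE.map_one]) (y * x)
  simp only [star_one, one_mul, Finset.univ_unique, Finset.sum_const, Finset.card_singleton,
    one_smul] at hbessel
  exact CStarRing.star_mul_self_eq_zero_iff _ |>.1
    ((hbessel.trans hyx).antisymm (star_mul_self_nonneg _))

theorem IsRightQB.sum_mul_map (hE : IsCondExp (B : Set 𝔄) E) (hl : IsRightQB E l) (x : 𝔄) :
    ∑ i, l i * E (star (l i) * x) = x := by
  have h := congrArg star (hl (star x))
  simpa [← hE.map_star] using h.symm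

theorem IsRightQB.eq_of_forall_map_mul_eq (hl : IsRightQB E l) {y z : 𝔄}
    (h : ∀ x, E (y * x) = E (z * x)) : y = z := by
  rw [hl y, hl z]
  simp only [h]

theorem IsRightQB.eq_zero_of_map_star_mul_self (hE : IsCondExp (B : Set 𝔄) E)
    (hl : IsRightQB E l) {x : 𝔄} (hx : E (star x * x) = 0) : x = 0 := by
  rw [← hl.sum_mul_map hE x]
  simp only [hE.map_mul_eq_zero hx, mul_zero, Finset.sum_const_zero]

theorem IsRightQB.exists_map_eq_map_mul (hE : IsCondExp (B : Set 𝔄) E) (hl : IsRightQB E l)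
    {G : 𝔄 →ₗ[ℂ] 𝔄} (hGB : ∀ x, G x ∈ B) (hGleft : ∀ b ∈ B, ∀ x, G (b * x) = b * G x)
    (hGright : ∀ b ∈ B, ∀ x, G (x * b) = G x * b) :
    ∃ t ∈ relCommutant B, ∀ x, G x = E (t * x) := by
  have hdensity : ∀ x, G x = E ((∑ i, G (l i) * star (l i)) * x) := fun x => by
    conv_lhs => rw [← hl.sum_mul_map hE x]
    simp only [map_sum, Finset.sum_mul, mul_assoc, hGright _ (hE.1 _), hE.map_mul_left (hGB _)]
  refine ⟨_, mem_relCommutant_iff.2 fun b hb => hl.eq_of_forall_map_mul_eq fun x => ?_, hdensity⟩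
  rw [mul_assoc, ← hdensity, hGleft b hb, mul_assoc, hE.map_mul_left hb, hdensity]

/-- The operator `z ↦ ∑ᵢ lᵢ z lᵢ*`. Its value at `1` is the Watatani index when `l` is a
quasi-basis. -/
noncomputable def indexMap (l : Fin n → 𝔄) : 𝔄 →L[ℂ] 𝔄 :=
  ∑ i, ContinuousLinearMap.mulLeftRight ℂ 𝔄 (l i) (star (l i))

@[simp]
theorem indexMap_apply (l : Fin n → 𝔄) (z : 𝔄) : indexMap l z = ∑ i, l i * z * star (l i) := by
  simp [indexMap]

theorem IsRightQB.sum_mul_mul_map (hE : IsCondExp (B : Set 𝔄) E) (hl : IsRightQB E l) {y : 𝔄}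
    (hy : y ∈ relCommutant B) (x : 𝔄) : ∑ i, l i * y * E (star (l i) * x) = x * y := by
  conv_rhs => rw [← hl.sum_mul_map hE x]
  simp only [Finset.sum_mul, mul_assoc, hE.mul_map_comm hy]

theorem indexMap_mul_mul_eq_mul_indexMap_mul (hl : IsRightQB E l)
    (hF : IsCondExp (B : Set 𝔄) F) (hμ : IsRightQB F μ) {t w : 𝔄}
    (htw : ∀ x, F (x * w) = E (t * x)) {y : 𝔄} (hy : y ∈ relCommutant B) (a : 𝔄) :
    indexMap μ (y * t) * a = a * indexMap l (w * y) := by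
  have hexpand : ∀ x, t * x = ∑ j, F (x * l j * w) * star (l j) := fun x => by
    simp only [htw, ← mul_assoc]
    exact hl (t * x)
  calc indexMap μ (y * t) * a
      = ∑ i, μ i * y * (t * (star (μ i) * a)) := by
        simp [Finset.sum_mul, mul_assoc]
    _ = ∑ j, (∑ i, μ i * y * F (star (μ i) * (a * l j * w))) * star (l j) := by
        simp only [hexpand, Finset.mul_sum, Finset.sum_mul]
        rw [Finset.sum_comm]
        simp only [mul_assoc]
    _ = a * indexMap l (w * y) := by
        simp only [hμ.sum_mul_mul_map hF hy]
        simp [Finset.mul_sum, mul_assoc]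

theorem IsRightQB.exists_indexMap_eq_smul_one (hE : IsCondExp (B : Set 𝔄) E)
    (hl : IsRightQB E l) (hsimple : IsSimpleCStar (Set.univ : Set 𝔄)) {z : 𝔄}
    (hz : z ∈ relCommutant B) : ∃ c : ℂ, indexMap l z = c • (1 : 𝔄) := by
  have hcentral : ∀ a, indexMap l z * a = a * indexMap l z := fun a => by
    simpa using indexMap_mul_mul_eq_mul_indexMap_mul hl hE hl (t := 1) (w := 1) (by simp) hz a
  exact exists_eq_smul_one_of_isSimpleCStar (S := ⊤) isClosed_univ (by simpa using hsimple)
    trivial fun a _ => hcentral a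

theorem IsCondExp.exists_map_eq_smul_one (hE : IsCondExp (B : Set 𝔄) E)
    (hBclosed : IsClosed (B : Set 𝔄)) (hsimple : IsSimpleCStar (B : Set 𝔄)) {z : 𝔄}
    (hz : z ∈ relCommutant B) : ∃ c : ℂ, E z = c • (1 : 𝔄) :=
  exists_eq_smul_one_of_isSimpleCStar (S := B.toSubalgebra) hBclosed hsimple (hE.1 z)
    fun b hb => by
      rw [← hE.map_mul_left hb, ← hE.map_mul_right hb, mem_relCommutant_iff.1 hz b hb]

/-! ### Balanced expectations -/

/-- `E` is balanced with index `r` when, on the relative commutant, the operator `z ↦ ∑ᵢ lᵢ z lᵢ*`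
of some quasi-basis `l` is `r` times `E`. -/
def IsBalanced (B : StarSubalgebra ℂ 𝔄) (E : 𝔄 →ₗ[ℂ] 𝔄) (r : ℝ) : Prop :=
  ∃ (n : ℕ) (l : Fin n → 𝔄), IsRightQB E l ∧
    ∀ z ∈ relCommutant B, indexMap l z = (r : ℂ) • E z

theorem IsBalanced.map_mul_eq_map_mul {r : ℝ} (hEr : IsBalanced B E r) (hFr : IsBalanced B F r)
    (hr : r ≠ 0) (hF : IsCondExp (B : Set 𝔄) F) {t w : 𝔄} (ht : t ∈ relCommutant B)
    (hw : w ∈ relCommutant B) (htw : ∀ x, F (x * w) = E (t * x)) {y : 𝔄}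
    (hy : y ∈ relCommutant B) : F (y * t) = E (w * y) := by
  obtain ⟨n, l, hl, hlr⟩ := hEr
  obtain ⟨m, μ, hμ, hμr⟩ := hFr
  have h := indexMap_mul_mul_eq_mul_indexMap_mul hl hF hμ htw hy 1
  rw [mul_one, one_mul, hμr _ (mul_mem hy ht), hlr _ (mul_mem hw hy)] at h
  exact smul_right_injective _ (Complex.ofReal_ne_zero.2 hr) h

/-- If `t` denotes the density of `x ↦ F (x z)`, then `v = t - z` satisfies
`F (y v) = -E (v y)` on the relative commutant; at `y = v*` both sides have opposite signs. -/
theorem IsBalanced.map_mul_comm {r : ℝ} (hEr : IsBalanced B E r) (hFr : IsBalanced B F r)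
    (hr : r ≠ 0) (hE : IsCondExp (B : Set 𝔄) E) (hF : IsCondExp (B : Set 𝔄) F) {z : 𝔄}
    (hz : z ∈ relCommutant B) (x : 𝔄) : F (x * z) = E (z * x) := by
  obtain ⟨n, l, hl, -⟩ := id hEr
  obtain ⟨m, μ, hμ, -⟩ := id hFr
  obtain ⟨t, ht, htF⟩ := hl.exists_map_eq_map_mul hE (G := F ∘ₗ LinearMap.mulRight ℂ z)
    (fun x => hF.1 _) (fun b hb x => by simp [mul_assoc, hF.map_mul_left hb])
    (fun b hb x => by
      simp [mul_assoc, ← mem_relCommutant_iff.1 hz b hb, ← hF.map_mul_right hb])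
  simp only [LinearMap.comp_apply, LinearMap.mulRight_apply] at htF
  set v := t - z with hv
  have hvC : v ∈ relCommutant B := sub_mem ht hz
  have hneg : F (star v * v) = -E (v * star v) := by
    rw [hv, mul_sub, sub_mul, map_sub, map_sub, htF,
      hEr.map_mul_eq_map_mul hFr hr hF ht hz htF (star_mem hvC), neg_sub]
  have hzero : F (star v * v) = 0 :=
    (hneg.trans_le (neg_nonpos.2 (hE.map_nonneg (mul_star_self_nonneg v)))).antisymm
      (hF.map_nonneg (star_mul_self_nonneg v))
  rw [htF, sub_eq_zero.1 (hμ.eq_zero_of_map_star_mul_self hF hzero)]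

/-- The scalar Watatani index of `E` is `r`. -/
def HasIndex (E : 𝔄 →ₗ[ℂ] 𝔄) (r : ℝ) : Prop :=
  ∃ (n : ℕ) (l : Fin n → 𝔄), IsRightQB E l ∧ ∑ i, l i * star (l i) = (r : ℂ) • 1

theorem HasIndex.ne_zero [Nontrivial 𝔄] {r : ℝ} (hEr : HasIndex E r) : r ≠ 0 := by
  rintro rfl
  obtain ⟨n, l, hl, hsum⟩ := hEr
  have hl0 : ∀ i, l i = 0 := fun i => by
    rw [Complex.ofReal_zero, zero_smul,
      Finset.sum_eq_zero_iff_of_nonneg fun i _ => mul_star_self_nonneg (l i)] at hsum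
    exact CStarRing.mul_star_self_eq_zero_iff _ |>.1 (hsum i (Finset.mem_univ i))
  exact one_ne_zero ((hl 1).trans (by simp [hl0]))

theorem IsBalanced.hasIndex (hE : IsCondExp (B : Set 𝔄) E) {r : ℝ} (hEr : IsBalanced B E r) :
    HasIndex E r := by
  obtain ⟨n, l, hl, hlr⟩ := hEr
  exact ⟨n, l, hl, by simpa [hE.map_one] using hlr 1 (one_mem _)⟩

/-! ### Perturbation of a minimal expectation -/

theorem IsCondExp.conj (hE : IsCondExp (B : Set 𝔄) E) {k : 𝔄} (hk : k ∈ relCommutant B)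
    (hk1 : E (star k * k) = 1) :
    IsCondExp (B : Set 𝔄) (E ∘ₗ LinearMap.mulLeftRight ℂ (star k, k)) := by
  have hbimod : ∀ b₁ ∈ B, ∀ b₂ ∈ B, ∀ x,
      E (star k * (b₁ * x * b₂) * k) = b₁ * E (star k * x * k) * b₂ := fun b₁ h₁ b₂ h₂ x => by
    rw [← hE.2.2.2 b₁ h₁ b₂ h₂]
    simp only [mul_assoc, mem_relCommutant_iff.1 hk b₂ h₂]
    simp only [← mul_assoc, mem_relCommutant_iff.1 (star_mem hk) b₁ h₁]
  refine ⟨fun x => hE.1 _, fun b hb => ?_, fun x => ?_, by simpa using hbimod⟩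
  · simpa [hk1] using hbimod b hb 1 B.one_mem 1
  · simpa [mul_assoc] using hE.2.2.1 (x * k)

theorem IsRightQB.conj (hE : IsCondExp (B : Set 𝔄) E) (hl : IsRightQB E l) {k m : 𝔄}
    (hm : m ∈ relCommutant B) (hkm : k * m = 1) (hmk : m * k = 1) :
    IsRightQB (E ∘ₗ LinearMap.mulLeftRight ℂ (star k, k)) fun i => l i * m := fun x => by
  have hstar : star m * star k = 1 := by rw [← star_mul, hkm, star_one]
  calc x = star m * (star k * x) := by rw [← mul_assoc, hstar, one_mul]
    _ = ∑ i, star m * E (star k * x * l i) * star (l i) := by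
      conv_lhs => rw [hl (star k * x)]
      simp only [Finset.mul_sum, mul_assoc]
    _ = ∑ i, (E ∘ₗ LinearMap.mulLeftRight ℂ (star k, k)) (x * (l i * m)) * star (l i * m) := by
      simp [mul_assoc, hmk, hE.mul_map_comm (star_mem hm)]

theorem le_mul_of_forall_hasIndex_le [Nontrivial 𝔄] {r : ℝ} (hE : IsCondExp (B : Set 𝔄) E)
    (hl : IsRightQB E l) (hr : ∀ F, IsCondExp (B : Set 𝔄) F → ∀ s, HasIndex F s → r ≤ s)
    {k m : 𝔄} (hk : k ∈ relCommutant B) (hm : m ∈ relCommutant B) (hkm : k * m = 1)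
    (hmk : m * k = 1) {p q : ℂ} (hp : E (star k * k) = p • 1)
    (hq : indexMap l (m * star m) = q • 1) : r ≤ p.re * q.re := by
  obtain ⟨p, hp0, rfl⟩ := exists_ofReal_eq_of_smul_one_nonneg
    (hp ▸ hE.map_nonneg (star_mul_self_nonneg k))
  obtain ⟨q, -, rfl⟩ : ∃ s : ℝ, 0 ≤ s ∧ (s : ℂ) = q := by
    refine exists_ofReal_eq_of_smul_one_nonneg (𝔄 := 𝔄) (hq ▸ ?_)
    rw [indexMap_apply]
    refine Finset.sum_nonneg fun i _ => ?_
    simpa [mul_assoc] using mul_star_self_nonneg (l i * m)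
  obtain ⟨c, hcc, hcstar⟩ : ∃ c : ℂ, c * c = p ∧ star c = c :=
    ⟨√p, by rw [← Complex.ofReal_mul, Real.mul_self_sqrt hp0], Complex.conj_ofReal _⟩
  rw [← hcc] at hp
  have hc : c ≠ 0 := by
    rintro rfl
    rw [zero_mul, zero_smul] at hp
    simp [hl.eq_zero_of_map_star_mul_self hE hp] at hkm
  have hnorm : E (star (c⁻¹ • k) * (c⁻¹ • k)) = 1 := by
    rw [star_smul, star_inv₀, hcstar, smul_mul_smul_comm, map_smul, hp, smul_smul, ← mul_inv,
      inv_mul_cancel₀ (mul_ne_zero hc hc), one_smul]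
  have hindex : indexMap l ((c • m) * star (c • m)) = (p * q : ℂ) • 1 := by
    rw [star_smul, hcstar, smul_mul_smul_comm, map_smul, hq, smul_smul, hcc]
  refine hr _ (hE.conj (SMulMemClass.smul_mem _ hk) hnorm) _
    ⟨n, _, hl.conj hE (m := c • m) (SMulMemClass.smul_mem _ hm) ?_ ?_, ?_⟩
  · rw [smul_mul_smul_comm, inv_mul_cancel₀ hc, hkm, one_smul]
  · rw [smul_mul_smul_comm, mul_inv_cancel₀ hc, hmk, one_smul]
  · simpa only [indexMap_apply, star_mul, mul_assoc, Complex.ofReal_mul,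
      Complex.ofReal_re] using hindex

theorem exists_functional_smul_one_eq [Nontrivial 𝔄] {S : Set 𝔄} {T : 𝔄 →L[ℂ] 𝔄}
    (hT : ∀ z ∈ S, ∃ c : ℂ, T z = c • (1 : 𝔄)) :
    ∃ τ : 𝔄 →L[ℂ] ℂ, ∀ z ∈ S, T z = τ z • (1 : 𝔄) := by
  obtain ⟨φ, hφ⟩ := SeparatingDual.exists_eq_one (R := ℂ) (one_ne_zero (α := 𝔄))
  refine ⟨φ.comp T, fun z hz => ?_⟩
  obtain ⟨c, hc⟩ := hT z hz
  simp [hc, hφ]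

theorem exp_mem_relCommutant {a : 𝔄} (ha : a ∈ relCommutant B) :
    NormedSpace.exp a ∈ relCommutant B :=
  mem_relCommutant_iff.2 fun b hb => (Commute.exp_left (mem_relCommutant_iff.1 ha b hb)).eq

theorem index_le_re_mul_re_exp [Nontrivial 𝔄] {r : ℝ} (hE : IsCondExp (B : Set 𝔄) E)
    (hl : IsRightQB E l) (hr : ∀ F, IsCondExp (B : Set 𝔄) F → ∀ s, HasIndex F s → r ≤ s)
    {τ σ : 𝔄 → ℂ} (hτ : ∀ z ∈ relCommutant B, E z = τ z • (1 : 𝔄))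
    (hσ : ∀ z ∈ relCommutant B, indexMap l z = σ z • (1 : 𝔄)) {a : 𝔄} (ha : a ∈ relCommutant B)
    (hasa : IsSelfAdjoint a) :
    r ≤ (τ (NormedSpace.exp a)).re * (σ (NormedSpace.exp (-a))).re := by
  let _ := NormedAlgebra.restrictScalars ℚ ℂ 𝔄
  have hexp : ∀ s t : ℂ, NormedSpace.exp (s • a) * NormedSpace.exp (t • a) =
      NormedSpace.exp ((s + t) • a) := fun s t => by
    rw [add_smul, NormedSpace.exp_add_of_commute (((Commute.refl a).smul_left s).smul_right t)]
  have hmem : ∀ s : ℂ, NormedSpace.exp (s • a) ∈ relCommutant B := fun s =>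
    exp_mem_relCommutant (SMulMemClass.smul_mem s ha)
  have hstar : ∀ s : ℝ, star (NormedSpace.exp ((s : ℂ) • a)) = NormedSpace.exp ((s : ℂ) • a) :=
    fun s => by rw [NormedSpace.star_exp, star_smul, hasa.star_eq, RCLike.star_def,
      Complex.conj_ofReal]
  set k := NormedSpace.exp (((1 / 2 : ℝ) : ℂ) • a) with hk
  set m := NormedSpace.exp (((-1 / 2 : ℝ) : ℂ) • a) with hm
  have hkk : star k * k = NormedSpace.exp a := by
    rw [hk, hstar, hexp]
    norm_num
  have hmm : m * star m = NormedSpace.exp (-a) := by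
    rw [hm, hstar, hexp]
    norm_num
  refine le_mul_of_forall_hasIndex_le hE hl hr (hmem _) (hmem _) (k := k) (m := m) ?_ ?_
    (by rw [hkk, hτ _ (exp_mem_relCommutant ha)])
    (by rw [hmm, hσ _ (exp_mem_relCommutant (neg_mem ha))]) <;>
  · rw [hk, hm, hexp]
    norm_num

theorem ofReal_re_eq_of_smul_one_isSelfAdjoint [Nontrivial 𝔄] {c : ℂ}
    (hc : IsSelfAdjoint (c • (1 : 𝔄))) : (c.re : ℂ) = c := by
  rw [← Algebra.algebraMap_eq_smul_one,
    isSelfAdjoint_algebraMap_iff (algebraMap ℂ 𝔄).injective] at hc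
  exact Complex.conj_eq_iff_re.1 hc

/-- The inequality `index_le_re_mul_re_exp` along `t ↦ t • a` is an equality at `t = 0`, and
its derivative there gives the claim. -/
theorem functional_eq_mul_of_isSelfAdjoint [Nontrivial 𝔄] {r : ℝ} (hE : IsCondExp (B : Set 𝔄) E)
    (hl : IsRightQB E l) (hindex : ∑ i, l i * star (l i) = (r : ℂ) • 1)
    (hr : ∀ F, IsCondExp (B : Set 𝔄) F → ∀ s, HasIndex F s → r ≤ s) {τ σ : 𝔄 →L[ℂ] ℂ}
    (hτ : ∀ z ∈ relCommutant B, E z = τ z • (1 : 𝔄))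
    (hσ : ∀ z ∈ relCommutant B, indexMap l z = σ z • (1 : 𝔄)) {a : 𝔄} (ha : a ∈ relCommutant B)
    (hasa : IsSelfAdjoint a) : σ a = r * τ a := by
  have hτ1 : τ 1 = 1 := smul_left_injective ℂ (one_ne_zero (α := 𝔄)) <| by
    simp only [← hτ 1 (one_mem _), hE.map_one, one_smul]
  have hσ1 : σ 1 = r := smul_left_injective ℂ (one_ne_zero (α := 𝔄)) <| by
    simp only [← hσ 1 (one_mem _), indexMap_apply, mul_one, hindex]
  have hτa : ((τ a).re : ℂ) = τ a := ofReal_re_eq_of_smul_one_isSelfAdjoint (𝔄 := 𝔄) <| by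
    rw [← hτ a ha, isSelfAdjoint_iff, ← hE.map_star, hasa.star_eq]
  have hσa : ((σ a).re : ℂ) = σ a := ofReal_re_eq_of_smul_one_isSelfAdjoint (𝔄 := 𝔄) <| by
    rw [← hσ a ha, isSelfAdjoint_iff, indexMap_apply]
    simp [hasa.star_eq, mul_assoc]
  have hre := mul_apply_eq_of_le_apply_exp (Complex.reCLM.comp (τ.restrictScalars ℝ))
    (Complex.reCLM.comp (σ.restrictScalars ℝ)) a fun t => by
      simpa [hτ1, hσ1] using index_le_re_mul_re_exp hE hl hr hτ hσ
        (a := t • a) ((relCommutant B).smul_mem ha (t : ℂ)) ((IsSelfAdjoint.all t).smul hasa)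
  simp only [ContinuousLinearMap.comp_apply, ContinuousLinearMap.coe_restrictScalars', hτ1, hσ1,
    Complex.reCLM_apply, Complex.one_re, one_mul, Complex.ofReal_re] at hre
  rw [← hτa, ← hσa, hre, Complex.ofReal_mul, mul_comm]

theorem IsMinimalCondExp.exists_isBalanced [Nontrivial 𝔄] (hBclosed : IsClosed (B : Set 𝔄))
    (hA : IsSimpleCStar (Set.univ : Set 𝔄)) (hB : IsSimpleCStar (B : Set 𝔄))
    (hE : IsMinimalCondExp (B : Set 𝔄) E) :
    ∃ r : ℝ, IsBalanced B E r ∧ ∀ F, IsCondExp (B : Set 𝔄) F → ∀ s, HasIndex F s → r ≤ s := by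
  obtain ⟨hE, r, n, l, hl, hindex, hmin⟩ := hE
  have hr : ∀ F, IsCondExp (B : Set 𝔄) F → ∀ s, HasIndex F s → r ≤ s :=
    fun F hF s ⟨m, μ, hμ, hs⟩ => hmin F hF m μ hμ s hs
  obtain ⟨τ, hτ⟩ := exists_functional_smul_one_eq (T := ⟨E, hE.continuous⟩)
    fun z (hz : z ∈ relCommutant B) => hE.exists_map_eq_smul_one hBclosed hB hz
  obtain ⟨σ, hσ⟩ := exists_functional_smul_one_eq
    fun z (hz : z ∈ relCommutant B) => hl.exists_indexMap_eq_smul_one hE hA hz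
  simp only [ContinuousLinearMap.coe_mk'] at hτ
  have hrestrict : (indexMap l).toLinearMap ∘ₗ (relCommutant B).toSubmodule.subtype =
      ((r : ℂ) • E) ∘ₗ (relCommutant B).toSubmodule.subtype :=
    linearMap_ext_isSelfAdjoint (M := relCommutant B) fun a ha => by
      change indexMap l a = (r : ℂ) • E a
      rw [hσ a a.2, functional_eq_mul_of_isSelfAdjoint hE hl hindex hr hτ hσ a.2
        (congrArg Subtype.val ha), mul_smul, ← hτ a a.2]
  exact ⟨r, ⟨n, l, hl, fun z hz => LinearMap.congr_fun hrestrict ⟨z, hz⟩⟩, hr⟩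

theorem IsMinimalCondExp.map_mul_comm [Nontrivial 𝔄] (hBclosed : IsClosed (B : Set 𝔄))
    (hA : IsSimpleCStar (Set.univ : Set 𝔄)) (hB : IsSimpleCStar (B : Set 𝔄))
    (hE : IsMinimalCondExp (B : Set 𝔄) E) (hF : IsMinimalCondExp (B : Set 𝔄) F) {z : 𝔄}
    (hz : z ∈ relCommutant B) (x : 𝔄) : F (x * z) = E (z * x) := by
  obtain ⟨r, hEr, hrmin⟩ := hE.exists_isBalanced hBclosed hA hB
  obtain ⟨s, hFs, hsmin⟩ := hF.exists_isBalanced hBclosed hA hB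
  obtain rfl : r = s :=
    (hrmin F hF.1 s (hFs.hasIndex hF.1)).antisymm (hsmin E hE.1 r (hEr.hasIndex hE.1))
  exact hEr.map_mul_comm hFs (hEr.hasIndex hE.1).ne_zero hE.1 hF.1 hz x

theorem IsMinimalCondExp.unique [Nontrivial 𝔄] (hBclosed : IsClosed (B : Set 𝔄))
    (hA : IsSimpleCStar (Set.univ : Set 𝔄)) (hB : IsSimpleCStar (B : Set 𝔄))
    (hE : IsMinimalCondExp (B : Set 𝔄) E) (hF : IsMinimalCondExp (B : Set 𝔄) F) : F = E :=
  LinearMap.ext fun x => by simpa using hE.map_mul_comm hBclosed hA hB hF (one_mem _) x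

/-! ### Dimension of the centralizer -/

theorem IsRightQB.sum_map_mul_map (hE : IsCondExp (B : Set 𝔄) E) (hl : IsRightQB E l) {y : 𝔄}
    (hy : y ∈ relCommutant B) (x : 𝔄) :
    ∑ i, E (x * l i) * E (y * star (l i)) = E (y * x) := by
  conv_rhs => rw [hl x]
  simp only [Finset.mul_sum, map_sum, ← mul_assoc, hE.mul_map_comm hy]
  simp only [mul_assoc, hE.map_mul_left (hE.1 _)]

theorem IsRightQB.card_le_index [Nontrivial 𝔄] (hE : IsCondExp (B : Set 𝔄) E)
    (hl : IsRightQB E l) {r : ℝ} (hindex : ∑ i, l i * star (l i) = (r : ℂ) • 1) {ι : Type*}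
    [Fintype ι] [DecidableEq ι] {z : ι → 𝔄} (hzC : ∀ j, z j ∈ relCommutant B)
    (hcomm : ∀ j x, E (x * z j) = E (z j * x))
    (hz : ∀ i j, E (star (z i) * z j) = if i = j then 1 else 0) : (Fintype.card ι : ℝ) ≤ r := by
  have hsum : ∀ j, ∑ i, star (E (star (z j) * star (l i))) * E (star (z j) * star (l i)) = 1 :=
    fun j => by
      simp only [← hE.map_star, star_mul, star_star, hcomm,
        hl.sum_map_mul_map hE (star_mem (hzC j))]
      rw [← hcomm, hz, if_pos rfl]
  have hle : (Fintype.card ι : ℂ) • (1 : 𝔄) ≤ (r : ℂ) • 1 := calc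
    (Fintype.card ι : ℂ) • (1 : 𝔄)
      = ∑ i, ∑ j, star (E (star (z j) * star (l i))) * E (star (z j) * star (l i)) := by
        rw [Finset.sum_comm, Finset.sum_congr rfl fun j _ => hsum j]
        simp [Nat.cast_smul_eq_nsmul]
    _ ≤ ∑ i, E (l i * star (l i)) := Finset.sum_le_sum fun i _ => by
        simpa only [star_star] using hE.sum_star_mul_self_le hz (star (l i))
    _ = (r : ℂ) • 1 := by rw [← map_sum, hindex, map_smul, hE.map_one]
  rw [← sub_nonneg, ← sub_smul] at hle
  obtain ⟨s, hs, hsr⟩ := exists_ofReal_eq_of_smul_one_nonneg hle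
  have : s = r - Fintype.card ι := by exact_mod_cast hsr
  linarith

theorem IsMinimalCondExp.finiteDimensional_centSubmodule [Nontrivial 𝔄]
    (hBclosed : IsClosed (B : Set 𝔄)) (hA : IsSimpleCStar (Set.univ : Set 𝔄))
    (hB : IsSimpleCStar (B : Set 𝔄)) (hE : IsMinimalCondExp (B : Set 𝔄) E) :
    FiniteDimensional ℂ (centSubmodule (B : Set 𝔄)) := by
  have hcomm := fun z (hz : z ∈ relCommutant B) => hE.map_mul_comm hBclosed hA hB hE hz
  obtain ⟨hE, r, n, l, hl, hindex, -⟩ := hE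
  obtain ⟨τ, hτ⟩ := exists_functional_smul_one_eq (T := ⟨E, hE.continuous⟩)
    fun z (hz : z ∈ relCommutant B) => hE.exists_map_eq_smul_one hBclosed hB hz
  simp only [ContinuousLinearMap.coe_mk'] at hτ
  have hscalar := smul_left_injective ℂ (one_ne_zero (α := 𝔄))
  have hinner : ∀ x ∈ centSubmodule (B : Set 𝔄), ∀ y ∈ centSubmodule (B : Set 𝔄),
      E (star x * y) = τ (star x * y) • 1 := fun x hx y hy =>
    hτ _ (mul_mem (star_mem (mem_relCommutant_iff.2 hx)) (mem_relCommutant_iff.2 hy))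
  refine finiteDimensional_of_functional_orthonormal_card_le τ.toLinearMap (N := ⌊r⌋₊)
    (fun x hx y hy => ?_) (fun x hx => ?_) (fun x hx h => ?_) fun N z hz hδ => ?_
  · refine hscalar ?_
    simp only [ContinuousLinearMap.coe_coe]
    rw [← hinner x hx y hy, ← star_one 𝔄, ← star_smul, ← hinner y hy x hx, ← hE.map_star]
    simp
  · obtain ⟨s, hs, hsτ⟩ := exists_ofReal_eq_of_smul_one_nonneg
      (hinner x hx x hx ▸ hE.map_nonneg (star_mul_self_nonneg x))
    simpa [← hsτ] using hs
  · refine hl.eq_zero_of_map_star_mul_self hE ?_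
    rw [hinner x hx x hx, show τ (star x * x) = 0 from h, zero_smul]
  · refine Nat.le_floor ?_
    simpa using hl.card_le_index hE hindex (fun j => mem_relCommutant_iff.2 (hz j))
      (fun j => hcomm _ (mem_relCommutant_iff.2 (hz j))) fun i j => by
        rw [hinner _ (hz i) _ (hz j), show τ (star (z i) * z j) = _ from hδ i j]
        split_ifs <;> simp

/-! ### Automorphisms and the normalizer -/

theorem mem_cent_apply_iff {φ : 𝔄 ≃⋆ₐ[ℂ] 𝔄} {S : Set 𝔄} (hφ : ∀ x, φ x ∈ S ↔ x ∈ S) (z : 𝔄) :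
    φ z ∈ cent S ↔ z ∈ cent S := by
  refine (EquivLike.surjective φ).forall.trans (forall_congr' fun b => ?_)
  rw [hφ, ← map_mul, ← map_mul, (EquivLike.injective φ).eq_iff]

theorem IsMinCentralProjIn.map {φ : 𝔄 ≃⋆ₐ[ℂ] 𝔄} {S : Set 𝔄} (hφ : ∀ x, φ x ∈ S ↔ x ∈ S) {p : 𝔄}
    (hp : IsMinCentralProjIn S p) : IsMinCentralProjIn S (φ p) := by
  obtain ⟨hpS, hp0, hpp, hpstar, hpcomm, hpmin⟩ := hp
  refine ⟨(hφ p).2 hpS, (map_ne_zero_iff φ (EquivLike.injective φ)).2 hp0, by rw [← map_mul, hpp],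
    by rw [← map_star, hpstar], (EquivLike.surjective φ).forall.2 fun x hx => ?_,
    (EquivLike.surjective φ).forall.2 fun q hq hqq hqstar hqcomm hqp => ?_⟩
  · rw [← map_mul, hpcomm x ((hφ x).1 hx), map_mul]
  · have hcomm : ∀ x ∈ S, q * x = x * q := fun x hx => (EquivLike.injective φ) <| by
      rw [map_mul, hqcomm _ ((hφ x).2 hx), map_mul]
    simp only [← map_mul, ← map_star, (EquivLike.injective φ).eq_iff] at hqq hqstar hqp
    exact (hpmin q ((hφ q).1 hq) hqq hqstar hcomm hqp).imp (fun h => by rw [h, map_zero])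
      (congrArg φ)

theorem IsMinimalCondExp.conj_starAlgEquiv (hE : IsMinimalCondExp (B : Set 𝔄) E)
    {φ : 𝔄 ≃⋆ₐ[ℂ] 𝔄} (hφ : ∀ x, φ x ∈ B ↔ x ∈ B) :
    IsMinimalCondExp (B : Set 𝔄) (φ.toAlgEquiv.toLinearEquiv.symm.conj E) := by
  obtain ⟨⟨hEB, hEid, hEpos, hEmod⟩, r, n, l, hl, hindex, hmin⟩ := hE
  have happly : ∀ x, φ.toAlgEquiv.toLinearEquiv.symm.conj E x = φ.symm (E (φ x)) := fun _ => rfl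
  have hsymm : ∀ x, φ.symm x ∈ B ↔ x ∈ B := fun x => by rw [← hφ, φ.apply_symm_apply]
  refine ⟨⟨fun x => ?_, fun b hb => ?_, fun x => ?_, fun b₁ h₁ b₂ h₂ x => ?_⟩, r, n,
    fun i => φ.symm (l i), fun x => (EquivLike.injective φ) ?_, ?_, hmin⟩
  · exact (hsymm _).2 (hEB _)
  · rw [happly, hEid _ ((hφ b).2 hb), φ.symm_apply_apply]
  · obtain ⟨y, hy⟩ := hEpos (φ x)
    exact ⟨φ.symm y, by rw [happly, map_mul, map_star, hy, map_mul, map_star]⟩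
  · simp [happly, hEmod _ ((hφ b₁).2 h₁) _ ((hφ b₂).2 h₂)]
  · simpa [happly, map_star] using hl (φ x)
  · simpa only [map_sum, map_mul, map_star, map_smul, map_one] using congrArg φ.symm hindex

theorem IsMinimalCondExp.map_starAlgEquiv [Nontrivial 𝔄] (hBclosed : IsClosed (B : Set 𝔄))
    (hA : IsSimpleCStar (Set.univ : Set 𝔄)) (hB : IsSimpleCStar (B : Set 𝔄))
    (hE : IsMinimalCondExp (B : Set 𝔄) E) {φ : 𝔄 ≃⋆ₐ[ℂ] 𝔄} (hφ : ∀ x, φ x ∈ B ↔ x ∈ B) (x : 𝔄) :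
    E (φ x) = φ (E x) := by
  rw [← φ.symm_apply_eq]
  exact LinearMap.congr_fun (hE.unique hBclosed hA hB (hE.conj_starAlgEquiv hφ)) x

theorem conjStarAlgAut_mem_iff_of_mem_normalizer {u : unitary 𝔄}
    (hu : (u : 𝔄) ∈ normalizer (B : Set 𝔄)) (x : 𝔄) :
    Unitary.conjStarAlgAut ℂ 𝔄 u x ∈ B ↔ x ∈ B := by
  have himage : Unitary.conjStarAlgAut ℂ 𝔄 u '' (B : Set 𝔄) = B := by
    exact hu.2
  rw [← SetLike.mem_coe, ← himage,
    (EquivLike.injective (Unitary.conjStarAlgAut ℂ 𝔄 u)).mem_set_image, SetLike.mem_coe]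

theorem IsMinCentralProjIn.mul_eq_zero {S : Set 𝔄} (hS : ∀ x ∈ S, ∀ y ∈ S, x * y ∈ S) {p q : 𝔄}
    (hp : IsMinCentralProjIn S p) (hq : IsMinCentralProjIn S q) (hne : p ≠ q) : p * q = 0 := by
  obtain ⟨hpS, -, hpp, hpstar, hpcomm, hpmin⟩ := hp
  obtain ⟨hqS, -, hqq, hqstar, hqcomm, hqmin⟩ := hq
  have hpq : p * q = q * p := hpcomm q hqS
  have hidem : p * q * (p * q) = p * q := IsIdempotentElem.mul_of_commute hpq hpp hqq
  have hstar : star (p * q) = p * q := by rw [star_mul, hpstar, hqstar, hpq]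
  have hcomm : ∀ x ∈ S, p * q * x = x * (p * q) := fun x hx =>
    ((show Commute p x from hpcomm x hx).mul_left (hqcomm x hx)).eq
  have hle_p : p * q * p = p * q := by rw [mul_assoc, ← hpq, ← mul_assoc, hpp]
  have hle_q : p * q * q = p * q := by rw [mul_assoc, hqq]
  rcases hpmin _ (hS p hpS q hqS) hidem hstar hcomm hle_p with h | h
  · exact h
  · exact (hqmin _ (hS p hpS q hqS) hidem hstar hcomm hle_q).resolve_right fun h' =>
      hne (h.symm.trans h')

theorem IsRegular.exists_eq_smul_one (hreg : IsRegular (B : Set 𝔄))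
    (hA : IsSimpleCStar (Set.univ : Set 𝔄)) {a : 𝔄} (hastar : star a = a)
    (ha : ∀ u : unitary 𝔄, (u : 𝔄) ∈ normalizer (B : Set 𝔄) →
      Unitary.conjStarAlgAut ℂ 𝔄 u a = a) : ∃ c : ℂ, a = c • (1 : 𝔄) := by
  have hnormalizer : StarAlgebra.adjoin ℂ (normalizer (B : Set 𝔄)) ≤
      StarSubalgebra.centralizer ℂ {a} := StarAlgebra.adjoin_le fun u hu => by
    have hua : u * a * star u = a := ha ⟨u, hu.1⟩ hu
    have hcomm : a * u = u * a := by
      conv_lhs => rw [← hua]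
      rw [mul_assoc, Unitary.star_mul_self_of_mem hu.1, mul_one]
    exact (StarSubalgebra.mem_centralizer_iff ℂ).2 fun g hg => by
      simp [Set.mem_singleton_iff.1 hg, hastar, hcomm]
  have hclosed : IsClosed (StarSubalgebra.centralizer ℂ {a} : Set 𝔄) := Set.isClosed_centralizer _
  have hcentral := hreg.ge.trans (StarSubalgebra.topologicalClosure_minimal hnormalizer hclosed)
  refine exists_eq_smul_one_of_isSimpleCStar (S := ⊤) isClosed_univ (by simpa using hA) trivial
    fun x _ => ?_
  exact ((StarSubalgebra.mem_centralizer_iff ℂ).1 (hcentral (x := x) trivial) a rfl).1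

theorem IsRegular.sum_eq_one (hreg : IsRegular (B : Set 𝔄))
    (hA : IsSimpleCStar (Set.univ : Set 𝔄)) {O : Finset 𝔄}
    (hO : ∀ u : unitary 𝔄, (u : 𝔄) ∈ normalizer (B : Set 𝔄) →
      ∀ q ∈ O, Unitary.conjStarAlgAut ℂ 𝔄 u q ∈ O)
    (hidem : ∀ q ∈ O, IsIdempotentElem q) (hstar : ∀ q ∈ O, star q = q)
    (horth : (O : Set 𝔄).Pairwise fun p q => p * q = 0) {p : 𝔄} (hp : p ∈ O) (hp0 : p ≠ 0) :
    ∑ q ∈ O, q = 1 := by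
  have hinv : ∀ u : unitary 𝔄, (u : 𝔄) ∈ normalizer (B : Set 𝔄) →
      Unitary.conjStarAlgAut ℂ 𝔄 u (∑ q ∈ O, q) = ∑ q ∈ O, q := fun u hu => by
    have hinj := EquivLike.injective (Unitary.conjStarAlgAut ℂ 𝔄 u)
    rw [map_sum]
    exact Finset.sum_nbij _ (hO u hu) hinj.injOn
      (Finset.surjOn_of_injOn_of_card_le _ (hO u hu) hinj.injOn le_rfl) fun _ _ => rfl
  have hsumstar : star (∑ q ∈ O, q) = ∑ q ∈ O, q := by rw [star_sum, Finset.sum_congr rfl hstar]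
  obtain ⟨c, hc⟩ := hreg.exists_eq_smul_one hA hsumstar hinv
  have hcp : c • p = (1 : ℂ) • p := calc
    c • p = (∑ q ∈ O, q) * p := by rw [hc, smul_one_mul]
    _ = p * p := by
      rw [Finset.sum_mul, Finset.sum_eq_single_of_mem p hp fun q hq hqp => horth hq hp hqp]
    _ = (1 : ℂ) • p := by rw [(hidem p hp).eq, one_smul]
  rw [hc, smul_left_injective ℂ hp0 hcp, one_smul]

theorem finite_setOf_isMinCentralProjIn {M : Submodule ℂ 𝔄} [FiniteDimensional ℂ M]
    (hM : ∀ x ∈ M, ∀ y ∈ M, x * y ∈ M) : {q | IsMinCentralProjIn (M : Set 𝔄) q}.Finite :=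
  finite_of_linearIndepOn_subset (M := M)
    (linearIndepOn_of_orthogonal_idempotents (fun h => h.2.1 rfl) (fun _ hq => hq.2.2.1)
      fun _ hp _ hq => hp.mul_eq_zero hM hq) fun _ hq => hq.1

theorem mul_mem_centSubmodule {x y : 𝔄} (hx : x ∈ centSubmodule (B : Set 𝔄))
    (hy : y ∈ centSubmodule (B : Set 𝔄)) : x * y ∈ centSubmodule (B : Set 𝔄) :=
  mem_relCommutant_iff.1 (mul_mem (mem_relCommutant_iff.2 hx) (mem_relCommutant_iff.2 hy))

/-- The minimal central projections on which `E` and the dimension of the block agree with their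
values at `p` are permuted by the normalizer. -/
theorem IsMinimalCondExp.exists_finset_sum_eq_one [Nontrivial 𝔄] (hBclosed : IsClosed (B : Set 𝔄))
    (hA : IsSimpleCStar (Set.univ : Set 𝔄)) (hB : IsSimpleCStar (B : Set 𝔄))
    (hreg : IsRegular (B : Set 𝔄)) (hE : IsMinimalCondExp (B : Set 𝔄) E) {p : 𝔄}
    (hp : IsMinCentralProjIn (cent (B : Set 𝔄)) p) :
    ∃ O : Finset 𝔄, ∑ q ∈ O, q = 1 ∧ ∀ q ∈ O, IsMinCentralProjIn (cent (B : Set 𝔄)) q ∧ E q = E p ∧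
      Module.finrank ℂ ((centSubmodule (B : Set 𝔄)).map (LinearMap.mulLeft ℂ q)) =
        Module.finrank ℂ ((centSubmodule (B : Set 𝔄)).map (LinearMap.mulLeft ℂ p)) := by
  have : FiniteDimensional ℂ (centSubmodule (B : Set 𝔄)) :=
    hE.finiteDimensional_centSubmodule hBclosed hA hB
  have hmul : ∀ x ∈ cent (B : Set 𝔄), ∀ y ∈ cent (B : Set 𝔄), x * y ∈ cent (B : Set 𝔄) :=
    fun _ hx _ => mul_mem_centSubmodule hx
  obtain ⟨O, hO⟩ := (finite_setOf_isMinCentralProjIn (M := centSubmodule (B : Set 𝔄)) hmul).subset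
    (Set.sep_subset _ fun q => E q = E p ∧
      Module.finrank ℂ ((centSubmodule (B : Set 𝔄)).map (LinearMap.mulLeft ℂ q)) =
        Module.finrank ℂ ((centSubmodule (B : Set 𝔄)).map (LinearMap.mulLeft ℂ p)))
      |>.exists_finset
  refine ⟨O, hreg.sum_eq_one hA (fun u hu q hq => ?_) (fun q hq => ((hO q).1 hq).1.2.2.1)
    (fun q hq => ((hO q).1 hq).1.2.2.2.1)
    (fun q hq q' hq' => ((hO q).1 hq).1.mul_eq_zero hmul ((hO q').1 hq').1)
    ((hO p).2 ⟨hp, rfl, rfl⟩) hp.2.1, fun q hq => (hO q).1 hq⟩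
  obtain ⟨hqmin, hqE, hqrank⟩ := (hO q).1 hq
  have hφB := conjStarAlgAut_mem_iff_of_mem_normalizer hu
  have hφC := mem_cent_apply_iff hφB
  obtain ⟨c, hc⟩ := hE.1.exists_map_eq_smul_one hBclosed hB (mem_relCommutant_iff.2 hqmin.1)
  refine (hO _).2 ⟨hqmin.map hφC, ?_, (finrank_map_mulLeft_apply
    (φ := (Unitary.conjStarAlgAut ℂ 𝔄 u).toAlgEquiv) hφC q).trans hqrank⟩
  rw [hE.map_starAlgEquiv hBclosed hA hB hφB, ← hqE, hc, map_smul, _root_.map_one]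

theorem IsMinimalCondExp.finrank_smul_map_eq [Nontrivial 𝔄] (hBclosed : IsClosed (B : Set 𝔄))
    (hA : IsSimpleCStar (Set.univ : Set 𝔄)) (hB : IsSimpleCStar (B : Set 𝔄))
    (hreg : IsRegular (B : Set 𝔄)) (hE : IsMinimalCondExp (B : Set 𝔄) E) {p : 𝔄}
    (hp : IsMinCentralProjIn (cent (B : Set 𝔄)) p) :
    (Module.finrank ℂ (centSubmodule (B : Set 𝔄)) : ℂ) • E p =
      (Module.finrank ℂ ((centSubmodule (B : Set 𝔄)).map (LinearMap.mulLeft ℂ p)) : ℂ) • 1 := by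
  have : FiniteDimensional ℂ (centSubmodule (B : Set 𝔄)) :=
    hE.finiteDimensional_centSubmodule hBclosed hA hB
  obtain ⟨O, hsum, hO⟩ := hE.exists_finset_sum_eq_one hBclosed hA hB hreg hp
  have hmulLeft : ∑ q ∈ O, LinearMap.mulLeft ℂ q = 1 := LinearMap.ext fun x => by
    simp [LinearMap.sum_apply, ← Finset.sum_mul, hsum]
  have hrank : Module.finrank ℂ (centSubmodule (B : Set 𝔄)) =
      O.card * Module.finrank ℂ ((centSubmodule (B : Set 𝔄)).map (LinearMap.mulLeft ℂ p)) := by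
    rw [finrank_eq_sum_finrank_map (fun q hq => ?_) (fun q hq x hx =>
      mul_mem_centSubmodule (hO q hq).1.1 hx) hmulLeft, Finset.sum_congr rfl fun q hq =>
      (hO q hq).2.2, Finset.sum_const, smul_eq_mul]
    exact LinearMap.ext fun x => by simp [← mul_assoc, (hO q hq).1.2.2.1]
  have hcard : (O.card : ℂ) • E p = 1 := by
    rw [← hE.1.map_one, ← hsum, map_sum, Finset.sum_congr rfl fun q hq => (hO q hq).2.1,
      Finset.sum_const, Nat.cast_smul_eq_nsmul]
  rw [hrank, Nat.cast_mul, mul_comm, mul_smul, hcard]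

end CondExp

/-- for a regular inclusion `B ⊂ A` of simple unital C*-algebras with a
finite-index conditional expectation and minimal conditional expectation `E₀`, the
centralizer `C_A(B)` is finite dimensional, `E₀` maps it into `ℂ·1`, and the induced
functional `τ₀` is a faithful tracial state which is the Markov trace for
`ℂ ⊆ C_A(B)` with modulus `dim_ℂ C_A(B)`. -/
theorem tau0_is_Markov_trace
    (B : StarSubalgebra ℂ A) (hBclosed : IsClosed (B : Set A))
    (hAsimple : IsSimpleCStar (Set.univ : Set A))
    (hBsimple : IsSimpleCStar (B : Set A))
    (hreg : IsRegular (B : Set A))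
    (E : A →ₗ[ℂ] A) (hE : IsCondExp (B : Set A) E)
    (nE : ℕ) (lE : Fin nE → A) (hlE : IsRightQB E lE)
    (E₀ : A →ₗ[ℂ] A) (hE₀ : IsMinimalCondExp (B : Set A) E₀) :
    FiniteDimensional ℂ ↥(centSubmodule (B : Set A)) ∧
    (∀ z ∈ cent (B : Set A), ∃ c : ℂ, E₀ z = c • (1 : A)) ∧
    (∀ y ∈ cent (B : Set A), ∀ z ∈ cent (B : Set A), E₀ (y * z) = E₀ (z * y)) ∧
    (∀ z ∈ cent (B : Set A), E₀ (star z * z) = 0 → z = 0) ∧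
    (∀ p : A, IsMinCentralProjIn (cent (B : Set A)) p →
      ((Module.finrank ℂ ↥(centSubmodule (B : Set A)) : ℕ) : ℂ) • E₀ p =
        ((Module.finrank ℂ
            ↥((centSubmodule (B : Set A)).map (LinearMap.mulLeft ℂ p)) : ℕ) : ℂ) •
          (1 : A)) := by
  rcases subsingleton_or_nontrivial A with hA | hA
  · exact ⟨inferInstance, fun _ _ => ⟨0, Subsingleton.elim _ _⟩,
      fun _ _ _ _ => Subsingleton.elim _ _, fun _ _ _ => Subsingleton.elim _ _,
      fun _ _ => Subsingleton.elim _ _⟩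
  let _ : CStarAlgebra A := {}
  obtain ⟨hE₀', r, n, l, hl, -⟩ := id hE₀
  exact ⟨hE₀.finiteDimensional_centSubmodule hBclosed hAsimple hBsimple,
    fun z hz => hE₀'.exists_map_eq_smul_one hBclosed hBsimple (mem_relCommutant_iff.2 hz),
    fun y _ z hz =>
      hE₀.map_mul_comm hBclosed hAsimple hBsimple hE₀ (mem_relCommutant_iff.2 hz) y,
    fun z _ hz => hl.eq_zero_of_map_star_mul_self hE₀' hz,
    fun p hp => hE₀.finrank_smul_map_eq hBclosed hAsimple hBsimple hreg hp⟩

end RegularInclusion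
end

section
/- Let H be a complex Hilbert space, B ⊆ B(H) a simple unital C*-subalgebra containing the identity operator, K a finite group, and w : K → U(B(H)) a map with w_e = 1 such that: (i) for all s, t ∈ K the operator σ(s,t) := w_s w_t w_{st}* is a unitary belonging to B; (ii) w_s B w_s* = B for all s ∈ K; and (iii) for every s ≠ e the automorphism Ad(w_s)|_B of B is outer. Let A := C*(B ∪ {w_s : s ∈ K}) ⊆ B(H). Then the Weyl group W₀(B ⊂ A) := N_A(B)/U(B) is isomorphic to K. -/
/-!
A unitary of `A` normalizing `B` acts on `B` by conjugation and so has a class in the outer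
automorphism group `Out B`. As `B` is simple, its centre is `ℂ`, so a nonzero element of `B`
intertwining two automorphisms of `B` is a multiple of a unitary and the automorphisms have the same
class. The cocycle relation makes `s ↦ [Ad (w s)]` a homomorphism `K → Out B`, and outerness makes
it injective.

Right multiplication by `x ∈ B` is `B`-linear and sends `w s` to `Ad (w s) x • w s`. The `w s` are
thus simultaneous eigenvectors with pairwise inequivalent systems of eigenvalues and, as for
characters, this makes them linearly independent over `B`.

Being `K`-graded, the sums `∑ s, b s * w s` are the image of a closed *-algebra of matrices over `K`
under an injective, hence isometric, *-homomorphism. They are therefore closed and exhaust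
`A = C*(B ∪ {w s})`. If `v = ∑ s, b s * w s` normalizes `B`, comparing coefficients in
`v * x = Ad v x * v` shows that each `b s` intertwines `Ad (w s)` with `Ad v`. So `Ad v` and
`Ad (w s)` have the same class whenever `b s ≠ 0`, which by injectivity happens for only one `s`,
and `v = b s * w s`.
-/

namespace RegularInclusion

variable {A : Type*} [NormedRing A] [StarRing A] [CStarRing A] [CompleteSpace A]
  [NormedAlgebra ℂ A] [StarModule ℂ A]

/-- The normalizer of `B` computed inside the C*-subalgebra (given by the subset) `S`. -/
def normalizerIn (S B : Set A) : Set A :=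
  {u | u ∈ S ∧ u ∈ unitary A ∧ (fun x => u * x * star u) '' B = B}

section Eigenvectors

variable {ι X D M : Type*} [Ring D] [AddCommGroup M] [Module D M] {w : ι → M}

lemma semiconjBy_coeff_of_map_sum_eq_smul {f : Module.End D M} {l : ι → D} {m : D}
    {F : Finset ι} (hw : LinearIndepOn D w F) (hf : ∀ i, f (w i) = l i • w i) {c : ι → D}
    (hfc : f (∑ i ∈ F, c i • w i) = m • ∑ i ∈ F, c i • w i) {i : ι} (hi : i ∈ F) :
    SemiconjBy (c i) (l i) m := by
  have hrel : ∑ i ∈ F, (c i * l i - m * c i) • w i = 0 := by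
    simpa only [map_sum, map_smul, hf, Finset.smul_sum, smul_smul,
      ← sub_eq_zero (b := Finset.sum _ _), ← Finset.sum_sub_distrib, ← sub_smul] using hfc
  exact sub_eq_zero.1 (linearIndepOn_finset_iff.1 hw _ hrel i hi)

variable [IsSimpleRing D] {f : X → Module.End D M} {l : ι → X → D}

-- The coefficients at `t` of the relations supported on `F` form a two-sided ideal of `D`.
lemma exists_relation_coeff_eq_one (hf : ∀ i x, f x (w i) = l i x • w i) {t : ι}
    (hl : Function.Surjective (l t)) {F : Finset ι} {c : ι → D}
    (hc : ∑ i ∈ F, c i • w i = 0) (hct : c t ≠ 0) :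
    ∃ c' : ι → D, c' t = 1 ∧ ∑ i ∈ F, c' i • w i = 0 := by
  let J : TwoSidedIdeal D := .mk' {d | ∃ c : ι → D, c t = d ∧ ∑ i ∈ F, c i • w i = 0}
    ⟨0, rfl, by simp⟩
    (by
      rintro _ _ ⟨a, rfl, ha⟩ ⟨b, rfl, hb⟩
      exact ⟨a + b, rfl, by simp [add_smul, Finset.sum_add_distrib, ha, hb]⟩)
    (by
      rintro _ ⟨a, rfl, ha⟩
      exact ⟨-a, rfl, by simp [ha]⟩)
    (by
      rintro d _ ⟨a, rfl, ha⟩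
      exact ⟨fun i => d * a i, rfl, by simp [mul_smul, ← Finset.smul_sum, ha]⟩)
    (by
      rintro _ d ⟨a, rfl, ha⟩
      obtain ⟨x, rfl⟩ := hl d
      exact ⟨fun i => a i * l i x, rfl, by simpa [hf, mul_smul] using congrArg (f x) ha⟩)
  have hJ : c t ∈ J := (TwoSidedIdeal.mem_mk' ..).2 ⟨c, rfl, hc⟩
  have h1 : 1 ∈ J := IsSimpleRing.one_mem_of_ne_zero_mem J hct hJ
  rwa [TwoSidedIdeal.mem_mk'] at h1

theorem linearIndependent_of_eigenvectors (hf : ∀ i x, f x (w i) = l i x • w i)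
    (hl : ∀ i, Function.Surjective (l i)) (hw : ∀ i, w i ≠ 0)
    (hfree : ∀ i j d, (∀ x, SemiconjBy d (l i x) (l j x)) → d ≠ 0 → i = j) :
    LinearIndependent D w := by
  classical
  suffices h : ∀ F : Finset ι, LinearIndepOn D w F from
    linearIndepOn_univ_iff.1 (linearIndepOn_iff_linearIndepOn_finset.2 fun F _ => h F)
  intro F
  induction F using Finset.induction_on with
  | empty => simp
  | insert t F ht ih =>
    suffices key : ∀ c : ι → D, ∑ i ∈ insert t F, c i • w i = 0 → c t = 0 by
      refine linearIndepOn_finset_iff.2 fun c hc => ?_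
      have hcF : ∑ i ∈ F, c i • w i = 0 := by
        simpa only [Finset.sum_insert ht, key c hc, zero_smul, zero_add] using hc
      exact Finset.forall_mem_insert .. |>.2 ⟨key c hc, linearIndepOn_finset_iff.1 ih c hcF⟩
    by_contra! ⟨c, hc, hct⟩
    obtain ⟨a, hat, ha⟩ := exists_relation_coeff_eq_one hf (hl t) hc hct
    rw [Finset.sum_insert ht, hat, one_smul] at ha
    have hsum : ∑ i ∈ F, a i • w i = -w t := eq_neg_of_add_eq_zero_right ha
    have ha0 : ∀ i ∈ F, a i = 0 := fun i hi => by
      by_contra hai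
      have hsemi : ∀ x, SemiconjBy (a i) (l i x) (l t x) := fun x =>
        semiconjBy_coeff_of_map_sum_eq_smul ih (hf · x) (by simp [hsum, hf]) hi
      exact ht (hfree i t (a i) hsemi hai ▸ hi)
    refine hw t (neg_eq_zero.1 (hsum ▸ Finset.sum_eq_zero fun i hi => ?_))
    rw [ha0 i hi, zero_smul]

end Eigenvectors

section SimpleAlgebra

theorem isCentral_of_isSimpleRing (D : Type*) [NormedRing D] [NormedAlgebra ℂ D] [CompleteSpace D]
    [IsSimpleRing D] : Algebra.IsCentral ℂ D where
  out := by
    intro z hz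
    obtain ⟨c, hc⟩ := spectrum.nonempty z
    refine ⟨c, ?_⟩
    by_contra hne
    have hmem : algebraMap ℂ D c - z ∈ Subring.center D :=
      Subring.mem_center_iff.2 (Subalgebra.mem_center_iff.1
        (sub_mem (Subalgebra.algebraMap_mem _ c) hz))
    obtain ⟨y, hy⟩ := (IsSimpleRing.isField_center D).mul_inv_cancel
      (a := ⟨_, hmem⟩) fun h => hne (sub_eq_zero.1 (congrArg Subtype.val h))
    have hy' : (algebraMap ℂ D c - z) * y = 1 := congrArg Subtype.val hy
    exact hc ⟨⟨_, y, hy', by rw [Subring.mem_center_iff.1 hmem, hy']⟩, rfl⟩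

variable {D : Type*} [CStarAlgebra D]

lemma exists_pos_star_mul_self_eq [Algebra.IsCentral ℂ D] {b : D} (hb : b ≠ 0)
    (hc : star b * b ∈ Subalgebra.center ℂ D) :
    ∃ r : ℝ, 0 < r ∧ star b * b = algebraMap ℝ D r := by
  have : Nontrivial D := ⟨b, 0, hb⟩
  obtain ⟨c, hc : algebraMap ℂ D c = star b * b⟩ := Algebra.IsCentral.out hc
  have hsa : IsSelfAdjoint c := by
    have : algebraMap ℂ D (star c) = algebraMap ℂ D c := by
      rw [algebraMap_star_comm, hc, (IsSelfAdjoint.star_mul_self b).star_eq]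
    exact FaithfulSMul.algebraMap_injective ℂ D this
  have hr : star b * b = algebraMap ℝ D c.re := by
    rw [← hc, IsScalarTower.algebraMap_apply ℝ ℂ D, Complex.coe_algebraMap,
      Complex.conj_eq_iff_re.1 hsa]
  have hnonneg : 0 ≤ c.re := spectrum_star_mul_self_nonneg (b := b) c.re (by
    rw [hr, spectrum.scalar_eq]; rfl)
  refine ⟨c.re, hnonneg.lt_of_ne' fun h0 => hb ?_, hr⟩
  rwa [h0, map_zero, CStarRing.star_mul_self_eq_zero_iff] at hr

lemma exists_smul_mem_unitary [Algebra.IsCentral ℂ D] {b : D} (hb : b ≠ 0)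
    (hl : star b * b ∈ Subalgebra.center ℂ D) (hr : b * star b ∈ Subalgebra.center ℂ D) :
    ∃ c : ℝ, c • b ∈ unitary D := by
  obtain ⟨r, hr0, hbr⟩ := exists_pos_star_mul_self_eq hb hl
  obtain ⟨r', -, hbr'⟩ := exists_pos_star_mul_self_eq (star_ne_zero.2 hb) (by rwa [star_star])
  rw [star_star] at hbr'
  have hrr' : r = r' := by
    have h : b * (star b * b) = b * star b * b := (mul_assoc ..).symm
    rw [hbr, hbr', ← Algebra.commutes, ← Algebra.smul_def, ← Algebra.smul_def] at h
    exact smul_left_injective ℝ hb h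
  subst hrr'
  have hsq : (√r)⁻¹ * (√r)⁻¹ * r = 1 := by
    rw [← mul_inv, Real.mul_self_sqrt hr0.le, inv_mul_cancel₀ hr0.ne']
  refine ⟨(√r)⁻¹, Unitary.mem_iff.2 ?_⟩
  rw [star_smul, star_trivial, smul_mul_smul_comm, smul_mul_smul_comm, hbr, hbr', Algebra.smul_def,
    ← map_mul, hsq, map_one]
  exact ⟨rfl, rfl⟩

theorem mul_inv_mem_range_conjStarAlgAut [IsSimpleRing D] {α β : D ≃⋆ₐ[ℂ] D} {b : D} (hb : b ≠ 0)
    (h : ∀ x, SemiconjBy b (α x) (β x)) : β * α⁻¹ ∈ (Unitary.conjStarAlgAut ℂ D).range := by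
  have : Algebra.IsCentral ℂ D := isCentral_of_isSimpleRing D
  have hstar : ∀ x, SemiconjBy (star b) (β x) (α x) := fun x => by
    simpa only [map_star, star_star] using (h (star x)).star_star_star
  obtain ⟨c, hc⟩ := exists_smul_mem_unitary hb
    (Subalgebra.mem_center_iff.2 fun y => by
      obtain ⟨x, rfl⟩ := α.surjective y
      exact ((hstar x).mul_left (h x)).eq.symm)
    (Subalgebra.mem_center_iff.2 fun y => by
      obtain ⟨x, rfl⟩ := β.surjective y
      exact ((h x).mul_left (hstar x)).eq.symm)
  refine ⟨⟨c • b, hc⟩, StarAlgEquiv.ext fun y => ?_⟩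
  obtain ⟨x, rfl⟩ := α.surjective y
  calc c • b * α x * star (c • b) = β x * (c • b) * star (c • b) := by
        rw [smul_mul_assoc, h x, mul_smul_comm]
    _ = β x := by rw [mul_assoc, Unitary.mul_star_self_of_mem hc, mul_one]
    _ = (β * α⁻¹) (α x) := congrArg β (α.symm_apply_apply x).symm

end SimpleAlgebra

section Normalizer

open Unitary

instance normal_range_conjStarAlgAut (D : Type*) [CStarAlgebra D] :
    (conjStarAlgAut ℂ D).range.Normal := by
  refine ⟨?_⟩
  rintro _ ⟨u, rfl⟩ α
  refine ⟨⟨α u, map_mem α u.2⟩, StarAlgEquiv.ext fun x => ?_⟩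
  calc α u * x * star (α u) = α u * α (α.symm x) * α (star (u : D)) := by
        rw [α.apply_symm_apply, map_star]
    _ = α (u * α.symm x * star (u : D)) := by rw [map_mul, map_mul]

/-- The outer automorphism group of the C*-algebra `D`: its *-automorphisms modulo the inner
ones. -/
abbrev OuterAut (D : Type*) [CStarAlgebra D] : Type _ :=
  (D ≃⋆ₐ[ℂ] D) ⧸ (conjStarAlgAut ℂ D).range

variable {R : Type*} [CStarAlgebra R] (B : StarSubalgebra ℂ R)

/-- The normalizer of the subalgebra `B` in the unitary group of the ambient algebra, as a group. -/
def unitaryNormalizer : Subgroup (unitary R) where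
  carrier := {u | ∀ x, conjStarAlgAut ℂ R u x ∈ B ↔ x ∈ B}
  one_mem' x := by simp
  mul_mem' {u v} hu hv x := by rw [map_mul, StarAlgEquiv.mul_apply, hu, hv]
  inv_mem' {u} hu x := by
    rw [← hu, ← StarAlgEquiv.mul_apply, ← map_mul, mul_inv_cancel, map_one, StarAlgEquiv.one_apply]

variable {B}

lemma mem_unitaryNormalizer_iff_image_eq {u : unitary R} :
    u ∈ unitaryNormalizer B ↔ (fun x : R => u * x * star (u : R)) '' (B : Set R) = B := by
  rw [eq_comm]
  exact Set.ext_iff.symm.trans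
    ((conjStarAlgAut ℂ R u).toEquiv.preimage_eq_iff_eq_image (B : Set R) B)

/-- The action of the normalizer of `B` on `B` by conjugation. -/
noncomputable def normalizerAut : unitaryNormalizer B →* (B ≃⋆ₐ[ℂ] B) where
  toFun u :=
    { toFun x := ⟨conjStarAlgAut ℂ R u x, (u.2 x).2 x.2⟩
      invFun x := ⟨conjStarAlgAut ℂ R u⁻¹ x, (u⁻¹.2 x).2 x.2⟩
      left_inv x := Subtype.ext <| by
        simp only [map_inv]
        exact (conjStarAlgAut ℂ R u).symm_apply_apply x
      right_inv x := Subtype.ext <| by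
        simp only [map_inv]
        exact (conjStarAlgAut ℂ R u).apply_symm_apply x
      map_mul' x y := Subtype.ext (map_mul ..)
      map_add' x y := Subtype.ext (map_add ..)
      map_star' x := Subtype.ext (map_star ..)
      map_smul' c x := Subtype.ext (map_smul ..) }
  map_one' := by ext; simp
  map_mul' u v := by ext; simp [mul_assoc]

lemma mul_coe_eq_normalizerAut_smul (u : unitaryNormalizer B) (x : B) :
    (u : R) * x = normalizerAut u x • (u : R) := by
  change (u : R) * x = u * x * star (u : R) * u
  rw [mul_assoc, Unitary.coe_star_mul_self, mul_one]

lemma coe_unitaryNormalizer_ne_zero [Nontrivial R] (u : unitaryNormalizer B) : (u : R) ≠ 0 :=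
  (Unitary.toUnits (u : unitary R)).isUnit.ne_zero

variable [IsClosed (B : Set R)]

theorem IsSimpleCStar.isSimpleRing [Nontrivial R]
    (h : IsSimpleCStar (B : Set R)) : IsSimpleRing B := by
  refine isSimpleRing_iff_isTwoSided_imp.2 ⟨inferInstance, fun I _ => ?_⟩
  have hval : IsClosed (Subtype.val '' (I.closure : Set B)) :=
    (IsClosed.isClosedEmbedding_subtypeVal ‹_›).isClosedMap _ isClosed_closure
  have hright : ∀ x ∈ I.closure, ∀ b : B, x * b ∈ I.closure := fun x hx b =>
    map_mem_closure (f := (· * b)) (continuous_mul_const b) hx fun _ hz => I.mul_mem_right b hz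
  rcases h (Subtype.val '' (I.closure : Set B)) (by rintro _ ⟨x, -, rfl⟩; exact x.2) hval
      ⟨0, zero_mem _, rfl⟩
      (by rintro _ ⟨x, hx, rfl⟩ _ ⟨y, hy, rfl⟩; exact ⟨x + y, add_mem hx hy, rfl⟩)
      (by
        rintro _ ⟨x, hx, rfl⟩ b hb
        exact ⟨⟨x * ⟨b, hb⟩, hright x hx _, rfl⟩,
          ⟨⟨b, hb⟩ * x, I.closure.mul_mem_left _ hx, rfl⟩⟩) with h0 | htop
  · refine .inl ((Submodule.eq_bot_iff _).2 fun x hx => Subtype.ext ?_)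
    exact h0.subset ⟨x, subset_closure hx, rfl⟩
  · refine .inr (by_contra fun hI => I.closure_ne_top hI ((Ideal.eq_top_iff_one _).2 ?_))
    obtain ⟨x, hx, hx1⟩ := htop.superset B.one_mem
    rwa [show x = 1 from Subtype.ext hx1] at hx

/-- The homomorphism from the normalizer of `B` to the outer automorphism group of `B` given by
conjugation. -/
noncomputable def normalizerOuterAut : unitaryNormalizer B →* OuterAut B :=
  (QuotientGroup.mk' _).comp normalizerAut

lemma normalizerOuterAut_eq_one_iff {u : unitaryNormalizer B} :
    normalizerOuterAut u = 1 ↔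
      ∃ b, b ∈ B ∧ b ∈ unitary R ∧ ∀ x ∈ B, (u : R) * x * star (u : R) = b * x * star b := by
  refine (QuotientGroup.eq_one_iff _).trans ⟨?_, ?_⟩
  · rintro ⟨b, hb⟩
    refine ⟨b, b.1.2, map_mem B.subtype b.2, fun x hx => ?_⟩
    exact congrArg Subtype.val (DFunLike.congr_fun hb ⟨x, hx⟩).symm
  · rintro ⟨b, hb, hbu, h⟩
    exact ⟨⟨⟨b, hb⟩, Subtype.ext hbu.1, Subtype.ext hbu.2⟩,
      StarAlgEquiv.ext fun x => Subtype.ext (h x x.2).symm⟩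

lemma normalizerOuterAut_eq_of_mul_star_mem {u v : unitaryNormalizer B}
    (h : (u : R) * star (v : R) ∈ B) : normalizerOuterAut u = normalizerOuterAut v := by
  rw [← mul_inv_eq_one, ← map_inv, ← map_mul, normalizerOuterAut_eq_one_iff]
  exact ⟨_, h, (u * v⁻¹ : unitaryNormalizer B).1.2, fun _ _ => rfl⟩

lemma normalizerOuterAut_eq_of_semiconjBy [IsSimpleRing B] {u v : unitaryNormalizer B} {b : B}
    (hb : b ≠ 0) (h : ∀ x, SemiconjBy b (normalizerAut u x) (normalizerAut v x)) :
    normalizerOuterAut u = normalizerOuterAut v :=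
  (QuotientGroup.eq_iff_div_mem.2
    (div_eq_mul_inv (normalizerAut v) _ ▸ mul_inv_mem_range_conjStarAlgAut hb h)).symm

theorem linearIndependent_of_injective_normalizerOuterAut [IsSimpleRing B] {ι : Type*}
    {w : ι → unitaryNormalizer B} (hw : Function.Injective (normalizerOuterAut ∘ w)) :
    LinearIndependent B fun i => (w i : R) := by
  have : Nontrivial R := Subtype.val_injective.nontrivial (α := B)
  exact linearIndependent_of_eigenvectors (f := fun x : B => LinearMap.mulRight B (x : R))
    (fun i => mul_coe_eq_normalizerAut_smul (w i)) (fun i => (normalizerAut (w i)).surjective)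
    (fun i => coe_unitaryNormalizer_ne_zero (w i))
    fun i j d h hd => hw (normalizerOuterAut_eq_of_semiconjBy hd h)

end Normalizer

section Grading

variable {R : Type*} [CStarAlgebra R] {K : Type*} [Group K]

/-- A C*-grading by the group `K`: a linearly independent family of closed subspaces `V s` with
`1 ∈ V 1`, `V s * V t ⊆ V (s * t)` and `star (V s) ⊆ V s⁻¹`. Their sum need not be dense. -/
structure IsCStarGrading (V : K → Submodule ℂ R) : Prop where
  isClosed : ∀ s, IsClosed (V s : Set R)
  one_mem : 1 ∈ V 1
  mul_mem : ∀ {s t x y}, x ∈ V s → y ∈ V t → x * y ∈ V (s * t)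
  star_mem : ∀ {s x}, x ∈ V s → star x ∈ V s⁻¹
  iSupIndep : iSupIndep V

namespace IsCStarGrading

variable [Fintype K] {V : K → Submodule ℂ R}

section RegularRepresentation

variable [DecidableEq K]

/-- The matrices standing for the sums `∑ s, x s ⊗ λ s` with `x s ∈ V s`, where `λ` is the left
regular representation of `K`: the `(s, t)` entry of this sum is `x (s * t⁻¹)`. -/
def regularMatrices (hV : IsCStarGrading V) : StarSubalgebra ℂ (CStarMatrix K K R) where
  carrier := {X | (∀ s t r, X (s * r) (t * r) = X s t) ∧ ∀ s t, X s t ∈ V (s * t⁻¹)}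
  mul_mem' := by
    rintro X Y ⟨hX, hXV⟩ ⟨hY, hYV⟩
    refine ⟨fun s t r => ?_, fun s t => ?_⟩
    · simp only [CStarMatrix.mul_apply]
      rw [← Equiv.sum_comp (Equiv.mulRight r)]
      simp only [Equiv.coe_mulRight, hX, hY]
    · rw [CStarMatrix.mul_apply]
      refine sum_mem fun j _ => ?_
      simpa only [mul_assoc, inv_mul_cancel_left] using hV.mul_mem (hXV s j) (hYV j t)
  add_mem' := by
    rintro X Y ⟨hX, hXV⟩ ⟨hY, hYV⟩
    exact ⟨fun s t r => congrArg₂ (· + ·) (hX s t r) (hY s t r),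
      fun s t => add_mem (hXV s t) (hYV s t)⟩
  algebraMap_mem' c := by
    refine ⟨fun s t r => by simp only [CStarMatrix.algebraMap_apply, mul_left_inj], fun s t => ?_⟩
    rw [CStarMatrix.algebraMap_apply]
    split_ifs with hst
    · rw [hst, mul_inv_cancel, Algebra.algebraMap_eq_smul_one]
      exact (V 1).smul_mem c hV.one_mem
    · exact zero_mem _
  star_mem' := by
    rintro X ⟨hX, hXV⟩
    refine ⟨fun s t r => by simp only [CStarMatrix.star_apply, hX], fun s t => ?_⟩
    simpa only [CStarMatrix.star_apply, mul_inv_rev, inv_inv] using hV.star_mem (hXV t s)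

variable (hV : IsCStarGrading V)

lemma regularMatrices_apply_eq (X : hV.regularMatrices) (s t : K) :
    (X : CStarMatrix K K R) s t = (X : CStarMatrix K K R) (s * t⁻¹) 1 := by
  rw [← X.2.1 s t t⁻¹, mul_inv_cancel]

lemma sum_regularMatrices_apply_eq (X : hV.regularMatrices) (t : K) :
    ∑ s, (X : CStarMatrix K K R) s t = ∑ s, (X : CStarMatrix K K R) s 1 := by
  simp only [hV.regularMatrices_apply_eq X _ t]
  exact Equiv.sum_comp (Equiv.mulRight t⁻¹) fun s => (X : CStarMatrix K K R) s 1

lemma regularMatrices_apply_one_mem (X : hV.regularMatrices) (s : K) :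
    (X : CStarMatrix K K R) s 1 ∈ V s := by
  simpa only [inv_one, mul_one] using X.2.2 s 1

/-- The *-homomorphism sending the matrix that stands for `∑ s, x s ⊗ λ s` to `∑ s, x s`. -/
noncomputable def sumHom : hV.regularMatrices →⋆ₐ[ℂ] R where
  toFun X := ∑ s, (X : CStarMatrix K K R) s 1
  map_one' := by simp [CStarMatrix.one_apply]
  map_zero' := by simp
  map_add' X Y := by simp [Finset.sum_add_distrib]
  map_mul' X Y := by
    simp only [MulMemClass.coe_mul, CStarMatrix.mul_apply]
    rw [Finset.sum_comm, Finset.mul_sum]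
    simp only [← Finset.sum_mul, hV.sum_regularMatrices_apply_eq]
  commutes' c := by
    change ∑ s, (algebraMap ℂ (CStarMatrix K K R) c) s 1 = _
    simp [CStarMatrix.algebraMap_apply]
  map_star' X := by
    change ∑ s, (star (X : CStarMatrix K K R)) s 1 = _
    simp only [CStarMatrix.star_apply, star_sum, hV.regularMatrices_apply_eq X 1, one_mul]
    exact Equiv.sum_comp (Equiv.inv K) fun s => star ((X : CStarMatrix K K R) s 1)

lemma sumHom_injective : Function.Injective hV.sumHom := by
  rw [injective_iff_map_eq_zero]
  intro X (hX : ∑ s, (X : CStarMatrix K K R) s 1 = 0)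
  have h0 := (iSupIndep_iff_finsetSum_eq_zero_imp_eq_zero V).1 hV.iSupIndep Finset.univ _
    (fun s _ => hV.regularMatrices_apply_one_mem X s) hX
  exact Subtype.ext (CStarMatrix.ext fun s t =>
    (hV.regularMatrices_apply_eq X s t).trans (h0 _ (Finset.mem_univ _)))

lemma mem_range_sumHom {s : K} {x : R} (hx : x ∈ V s) : x ∈ hV.sumHom.range := by
  refine ⟨⟨CStarMatrix.ofMatrix (Matrix.of fun i j => if i * j⁻¹ = s then x else 0),
    fun i j r => ?_, fun i j => ?_⟩, ?_⟩
  · simp only [CStarMatrix.ofMatrix_apply, Matrix.of_apply, mul_inv_rev, mul_assoc,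
      mul_inv_cancel_left]
  · simp only [CStarMatrix.ofMatrix_apply, Matrix.of_apply]
    split_ifs with hij
    · rwa [hij]
    · exact zero_mem _
  · change ∑ i : K, (if i * (1 : K)⁻¹ = s then x else 0) = x
    simp

lemma isClosed_regularMatrices :
    IsClosed (hV.regularMatrices : Set (CStarMatrix K K R)) := by
  have hentry (s t : K) : Continuous fun X : CStarMatrix K K R => X s t :=
    continuous_apply_apply (ρ := fun _ _ : K => R) s t
  have heq : (hV.regularMatrices : Set (CStarMatrix K K R)) =
      (⋂ s, ⋂ t, ⋂ r, {X | X (s * r) (t * r) = X s t}) ∩ ⋂ s, ⋂ t, {X | X s t ∈ V (s * t⁻¹)} := by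
    ext X
    simp only [Set.mem_inter_iff, Set.mem_iInter, Set.mem_ofPred_eq]
    rfl
  rw [heq]
  exact (isClosed_iInter fun s => isClosed_iInter fun t => isClosed_iInter fun r =>
    isClosed_eq (hentry _ _) (hentry _ _)).inter (isClosed_iInter fun s => isClosed_iInter fun t =>
      (hV.isClosed _).preimage (hentry s t))

lemma isClosed_range_sumHom : IsClosed (hV.sumHom.range : Set R) := by
  let := CStarAlgebra.spectralOrder R
  have := CStarAlgebra.spectralOrderedRing R
  have := hV.isClosed_regularMatrices
  have hiso := NonUnitalStarAlgHom.isometry hV.sumHom hV.sumHom_injective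
  exact hiso.isClosedEmbedding.isClosed_range

end RegularRepresentation

theorem exists_sum_eq_of_mem_topologicalClosure_adjoin (hV : IsCStarGrading V) {S : Set R}
    (hS : ∀ x ∈ S, ∃ s, x ∈ V s) {a : R} (ha : a ∈ (StarAlgebra.adjoin ℂ S).topologicalClosure) :
    ∃ x : K → R, (∀ s, x s ∈ V s) ∧ ∑ s, x s = a := by
  classical
  have hle : (StarAlgebra.adjoin ℂ S).topologicalClosure ≤ hV.sumHom.range :=
    StarSubalgebra.topologicalClosure_minimal (StarAlgebra.adjoin_le fun x hx =>
      (hS x hx).elim fun _ => hV.mem_range_sumHom) hV.isClosed_range_sumHom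
  obtain ⟨X, hX⟩ := hle ha
  exact ⟨_, hV.regularMatrices_apply_one_mem X, hX⟩

end IsCStarGrading

end Grading

section CrossedProduct

variable {R : Type*} [CStarAlgebra R] {B : StarSubalgebra ℂ R}

lemma exists_mul_star_mem_of_sum_smul_eq [IsClosed (B : Set R)] [IsSimpleRing B] {ι : Type*}
    [Fintype ι] {w : ι → unitaryNormalizer B} (hw : Function.Injective (normalizerOuterAut ∘ w))
    {v : unitaryNormalizer B} {b : ι → B} (hv : ∑ i, b i • (w i : R) = v) :
    ∃ i, (v : R) * star (w i : R) ∈ B := by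
  have hli := linearIndependent_of_injective_normalizerOuterAut hw
  have hintertwine (i : ι) (x : B) :
      SemiconjBy (b i) (normalizerAut (w i) x) (normalizerAut v x) := by
    refine semiconjBy_coeff_of_map_sum_eq_smul (hli.linearIndepOn _) (F := Finset.univ)
      (f := LinearMap.mulRight B (x : R)) (fun i => mul_coe_eq_normalizerAut_smul (w i) x) ?_
      (Finset.mem_univ i)
    rw [hv]
    exact mul_coe_eq_normalizerAut_smul v x
  have hclass {i : ι} (hi : b i ≠ 0) : normalizerOuterAut (w i) = normalizerOuterAut v :=
    normalizerOuterAut_eq_of_semiconjBy hi (hintertwine i)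
  obtain ⟨i, hi⟩ : ∃ i, b i ≠ 0 := by
    by_contra! h0
    have : Nontrivial R := Subtype.val_injective.nontrivial (α := B)
    refine coe_unitaryNormalizer_ne_zero v (hv ▸ Finset.sum_eq_zero fun i _ => ?_)
    rw [h0, zero_smul]
  have hvi : b i • (w i : R) = v := by
    rw [← hv, Finset.sum_eq_single_of_mem i (Finset.mem_univ i)]
    intro j _ hji
    by_cases hj : b j = 0
    · rw [hj, zero_smul]
    · exact absurd (hw ((hclass hj).trans (hclass hi).symm)) hji
  refine ⟨i, ?_⟩
  rw [← hvi, smul_mul_assoc, ← Unitary.coe_star, Unitary.coe_mul_star_self]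
  exact mul_mem (b i).2 B.one_mem

variable (B) in
/-- The translate `B * u` of the subalgebra `B` by a unitary `u`. -/
noncomputable def translate (u : unitary R) : Submodule ℂ R :=
  B.toSubalgebra.toSubmodule.comap (LinearMap.mulRight ℂ (star (u : R)))

lemma mem_translate_iff {u : unitary R} {x : R} :
    x ∈ translate B u ↔ ∃ b : B, b • (u : R) = x := by
  constructor
  · intro (hx : x * star (u : R) ∈ B)
    refine ⟨⟨_, hx⟩, ?_⟩
    change x * star (u : R) * u = x
    rw [mul_assoc, Unitary.coe_star_mul_self, mul_one]
  · rintro ⟨b, rfl⟩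
    change (b * u : R) * star (u : R) ∈ B
    rw [mul_assoc, ← Unitary.coe_star, Unitary.coe_mul_star_self, mul_one]
    exact b.2

lemma iSupIndep_translate {ι : Type*} {w : ι → unitary R}
    (hw : LinearIndependent B fun i => (w i : R)) : iSupIndep fun i => translate B (w i) := by
  refine (iSupIndep_iff_finsetSum_eq_zero_imp_eq_zero _).2 fun F x hx hsum i hi => ?_
  choose! b hb using fun i hi => mem_translate_iff.1 (hx i hi)
  have hb0 := linearIndependent_iff'.1 hw F b ((Finset.sum_congr rfl hb).trans hsum) i hi
  rw [← hb i hi, hb0, zero_smul]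

variable {K : Type*} [Group K] {w : K → unitaryNormalizer B}
  (hσ : ∀ s t, (w s * w t * star (w (s * t) : R) : R) ∈ B)

include hσ

lemma coe_one_mem_of_cocycle : (w 1 : R) ∈ B := by
  simpa [mul_assoc] using hσ 1 1

lemma mul_mem_translate {s t : K} {x y : R} (hx : x ∈ translate B (w s : unitary R))
    (hy : y ∈ translate B (w t : unitary R)) : x * y ∈ translate B (w (s * t) : unitary R) := by
  obtain ⟨b, rfl⟩ := mem_translate_iff.1 hx
  obtain ⟨c, rfl⟩ := mem_translate_iff.1 hy
  obtain ⟨d, hd⟩ := mem_translate_iff.1 (hσ s t)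
  refine mem_translate_iff.2 ⟨b * normalizerAut (w s) c * d, ?_⟩
  calc (b * normalizerAut (w s) c * d) • (w (s * t) : R)
      = b • normalizerAut (w s) c • (w s * w t : R) := by rw [mul_smul, mul_smul, hd]
    _ = b • ((w s * c : R) * w t) := by
      rw [mul_coe_eq_normalizerAut_smul, smul_mul_assoc]
    _ = (b • (w s : R)) * (c • (w t : R)) := by
      rw [smul_mul_assoc, mul_assoc]; rfl

lemma star_mem_translate {s : K} {x : R} (hx : x ∈ translate B (w s : unitary R)) :
    star x ∈ translate B (w s⁻¹ : unitary R) := by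
  obtain ⟨b, rfl⟩ := mem_translate_iff.1 hx
  have hinv : (w s⁻¹ * w s : R) ∈ B := by
    obtain ⟨d, hd⟩ := mem_translate_iff.1 (hσ s⁻¹ s)
    rw [← hd, inv_mul_cancel]
    exact mul_mem d.2 (coe_one_mem_of_cocycle hσ)
  refine mem_translate_iff.2 ⟨star ⟨_, hinv⟩ * normalizerAut (w s⁻¹) (star b), ?_⟩
  calc (star ⟨_, hinv⟩ * normalizerAut (w s⁻¹) (star b)) • (w s⁻¹ : R)
      = star (w s⁻¹ * w s : R) * (w s⁻¹ * star (b : R)) := by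
        rw [mul_smul, ← mul_coe_eq_normalizerAut_smul]; rfl
    _ = star (w s : R) * (star (w s⁻¹ : R) * w s⁻¹) * star (b : R) := by
        simp only [star_mul, mul_assoc]
    _ = star (b • (w s : R)) := by
        rw [Unitary.coe_star_mul_self, mul_one, ← star_mul]; rfl

theorem isCStarGrading_translate [IsClosed (B : Set R)]
    (hli : LinearIndependent B fun s => (w s : R)) :
    IsCStarGrading fun s => translate B (w s : unitary R) where
  isClosed s := IsClosed.preimage (continuous_mul_const _) ‹IsClosed (B : Set R)›
  one_mem := mul_mem (S := StarSubalgebra ℂ R) B.one_mem (star_mem (coe_one_mem_of_cocycle hσ))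
  mul_mem := mul_mem_translate hσ
  star_mem := star_mem_translate hσ
  iSupIndep := iSupIndep_translate hli

lemma exists_sum_smul_eq_of_mem_crossedProduct [IsClosed (B : Set R)] [Fintype K]
    (hli : LinearIndependent B fun s => (w s : R)) {a : R}
    (ha : a ∈ (StarAlgebra.adjoin ℂ
      ((B : Set R) ∪ Set.range fun s => (w s : R))).topologicalClosure) :
    ∃ b : K → B, ∑ s, b s • (w s : R) = a := by
  have hgen : ∀ x ∈ (B : Set R) ∪ Set.range fun s => (w s : R),
      ∃ s, x ∈ translate B (w s : unitary R) := by
    rintro _ (hx | ⟨s, rfl⟩)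
    · exact ⟨1, mul_mem hx (star_mem (coe_one_mem_of_cocycle hσ))⟩
    · exact ⟨s, mem_translate_iff.2 ⟨1, one_smul ..⟩⟩
  obtain ⟨x, hx, rfl⟩ :=
    (isCStarGrading_translate hσ hli).exists_sum_eq_of_mem_topologicalClosure_adjoin hgen ha
  choose b hb using fun s => mem_translate_iff.1 (hx s)
  exact ⟨b, Finset.sum_congr rfl fun s _ => hb s⟩

lemma normalizerOuterAut_mul_of_cocycle [IsClosed (B : Set R)] (s t : K) :
    normalizerOuterAut (w (s * t)) = normalizerOuterAut (w s) * normalizerOuterAut (w t) := by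
  rw [← map_mul]
  exact (normalizerOuterAut_eq_of_mul_star_mem (hσ s t)).symm

theorem injective_normalizerOuterAut_of_outer [IsClosed (B : Set R)]
    (houter : ∀ s, s ≠ 1 → ¬ ∃ u, u ∈ B ∧ u ∈ unitary R ∧
        ∀ x ∈ B, (w s : R) * x * star (w s : R) = u * x * star u) :
    Function.Injective (normalizerOuterAut ∘ w) := by
  refine (injective_iff_map_eq_one
    (MonoidHom.mk' _ (normalizerOuterAut_mul_of_cocycle hσ))).2 fun s hs => ?_
  by_contra hs1
  exact houter s hs1 (normalizerOuterAut_eq_one_iff.1 hs)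

end CrossedProduct

theorem Weyl_group_of_reduced_twisted_crossed_product_general
    {R : Type*} [CStarAlgebra R] (B : StarSubalgebra ℂ R) (hBclosed : IsClosed (B : Set R))
    (hBsimple : IsSimpleCStar (B : Set R)) {K : Type*} [Group K] [Finite K]
    (w : K → R) (hwu : ∀ s, w s ∈ unitary R)
    (hσ : ∀ s t, w s * w t * star (w (s * t)) ∈ B)
    (hwB : ∀ s, (fun x => w s * x * star (w s)) '' (B : Set R) = (B : Set R))
    (houter : ∀ s : K, s ≠ 1 → ¬ ∃ u, u ∈ (B : Set R) ∧ u ∈ unitary R ∧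
      ∀ x ∈ (B : Set R), w s * x * star (w s) = u * x * star u) :
    let A := (StarAlgebra.adjoin ℂ ((B : Set R) ∪ Set.range w)).topologicalClosure
    (∀ s, w s ∈ normalizerIn (A : Set R) (B : Set R)) ∧
    (∀ s t, w s * w t * star (w (s * t)) ∈ UB (B : Set R)) ∧
    (∀ s t : K, s ≠ t → w s * star (w t) ∉ UB (B : Set R)) ∧
    (∀ v ∈ normalizerIn (A : Set R) (B : Set R), ∃ s, v * star (w s) ∈ UB (B : Set R)) := by
  intro A
  obtain ⟨w, rfl⟩ : ∃ w' : K → unitaryNormalizer B, w = fun s => (w' s : R) :=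
    ⟨fun s => ⟨⟨w s, hwu s⟩, mem_unitaryNormalizer_iff_image_eq.2 (hwB s)⟩, rfl⟩
  have hinj := injective_normalizerOuterAut_of_outer hσ houter
  refine ⟨fun s => ⟨?_, hwu s, hwB s⟩, fun s t => ⟨hσ s t, ?_⟩, fun s t hst hu => ?_, ?_⟩
  · exact subset_closure (StarAlgebra.subset_adjoin ℂ _ (.inr ⟨s, rfl⟩))
  · exact mul_mem (mul_mem (hwu s) (hwu t)) (Unitary.star_mem (hwu _))
  · exact hst (hinj (normalizerOuterAut_eq_of_mul_star_mem hu.1))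
  rintro v ⟨hvA, hvu, hvB⟩
  cases nonempty_fintype K
  obtain hR | hR := subsingleton_or_nontrivial R
  · exact ⟨1, by simp [UB, Subsingleton.elim _ (1 : R)]⟩
  have := hBsimple.isSimpleRing
  obtain ⟨b, hb⟩ := exists_sum_smul_eq_of_mem_crossedProduct hσ
    (linearIndependent_of_injective_normalizerOuterAut hinj) hvA
  obtain ⟨s, hs⟩ := exists_mul_star_mem_of_sum_smul_eq hinj
    (v := ⟨⟨v, hvu⟩, mem_unitaryNormalizer_iff_image_eq.2 hvB⟩) hb
  exact ⟨s, hs, mul_mem hvu (Unitary.star_mem (hwu s))⟩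

/-- for a simple unital C*-subalgebra `B ⊆ B(H)`, a finite group `K`, and
unitaries `w : K → U(B(H))` with `w_e = 1` implementing a cocycle action on `B`
(`σ(s,t) = w_s w_t w_{st}*` a unitary of `B`, `w_s B w_s* = B`, and `Ad(w_s)|_B` outer
for `s ≠ e`), the Weyl group `W₀(B ⊂ A) = N_A(B)/U(B)` of
`A := C*(B ∪ {w_s}) = B ⋊^r_{(α,σ)} K` is isomorphic to `K` via `s ↦ [w_s]`. -/
theorem Weyl_group_of_reduced_twisted_crossed_product
    (H : Type*) [NormedAddCommGroup H] [InnerProductSpace ℂ H] [CompleteSpace H]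
    (B : StarSubalgebra ℂ (H →L[ℂ] H))
    (hBclosed : IsClosed (B : Set (H →L[ℂ] H)))
    (hBsimple : IsSimpleCStar (B : Set (H →L[ℂ] H)))
    (K : Type*) [Group K] [Fintype K]
    (w : K → (H →L[ℂ] H)) (hw1 : w 1 = 1)
    (hwu : ∀ s, w s ∈ unitary (H →L[ℂ] H))
    (hσ : ∀ s t, w s * w t * star (w (s * t)) ∈ (B : Set (H →L[ℂ] H)) ∧
      w s * w t * star (w (s * t)) ∈ unitary (H →L[ℂ] H))
    (hwB : ∀ s, (fun x => w s * x * star (w s)) '' (B : Set (H →L[ℂ] H))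
      = (B : Set (H →L[ℂ] H)))
    (houter : ∀ s : K, s ≠ 1 →
      ¬ ∃ u, u ∈ (B : Set (H →L[ℂ] H)) ∧ u ∈ unitary (H →L[ℂ] H) ∧
        ∀ x ∈ (B : Set (H →L[ℂ] H)), w s * x * star (w s) = u * x * star u) :
    (∀ s, w s ∈ normalizerIn
        (((StarAlgebra.adjoin ℂ ((B : Set (H →L[ℂ] H)) ∪ Set.range w)).topologicalClosure :
          StarSubalgebra ℂ (H →L[ℂ] H)) : Set (H →L[ℂ] H)) (B : Set (H →L[ℂ] H))) ∧
    (∀ s t, w s * w t * star (w (s * t)) ∈ UB (B : Set (H →L[ℂ] H))) ∧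
    (∀ s t : K, s ≠ t → w s * star (w t) ∉ UB (B : Set (H →L[ℂ] H))) ∧
    (∀ v ∈ normalizerIn
        (((StarAlgebra.adjoin ℂ ((B : Set (H →L[ℂ] H)) ∪ Set.range w)).topologicalClosure :
          StarSubalgebra ℂ (H →L[ℂ] H)) : Set (H →L[ℂ] H)) (B : Set (H →L[ℂ] H)),
      ∃ s, v * star (w s) ∈ UB (B : Set (H →L[ℂ] H))) :=
  Weyl_group_of_reduced_twisted_crossed_product_general B hBclosed hBsimple w hwu
    (fun s t => (hσ s t).1) hwB houter

end RegularInclusion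
end
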